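/- arXiv:2302.03363 — 4 statements merged into one kernel-verified Lean document; each statement's English description precedes it below -/
import Mathlib

section
/- Let X : (0,∞) → Ω → ℝ be a stochastic process on a probability space (Ω, F, P) such that: (i) almost surely the path t ↦ X_t(ω) is continuous on (0,∞); (ii) for every n ∈ ℕ, all times t₁,…,tₙ ∈ (0,∞) and all reals c₁,…,cₙ, the random variable ∑ᵢ cᵢ X_{tᵢ} has a centered Gaussian distribution; (iii) X is self-similar with exponent ρ ∈ ℝ, i.e. for every a > 0 the finite-dimensional distributions of (X_{at})_{t>0} coincide with those of (a^ρ X_t)_{t>0}; (iv) E[X₁²] = σ² with σ > 0. Then almost surely limsup_{t→+∞} |X_t| / (t^ρ √(2 log log t)) ≤ σ, and almost surely sup_{t ≥ 3} |X_t| / (t^ρ √(log log t)) < ∞. -/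
open MeasureTheory ProbabilityTheory Filter

theorem gaussianReal_zero_abs_tail (v : NNReal) {u : ℝ} (hu : 0 ≤ u) :
    gaussianReal 0 v {x | u < |x|} ≤ 2 * ENNReal.ofReal (Real.exp (-u ^ 2 / (2 * v))) := by
  have key : ∀ c : ℝ, c ^ 2 = 1 →
      gaussianReal 0 v {x | u ≤ c * x} ≤ ENNReal.ofReal (Real.exp (-u ^ 2 / (2 * v))) := by
    intro c hc
    have hsub : HasSubgaussianMGF (fun x : ℝ => c * x) v (gaussianReal 0 v) := by
      constructor
      · intro t
        simpa [mul_assoc] using integrable_exp_mul_gaussianReal (μ := 0) (v := v) (t * c)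
      · intro t
        have h : (gaussianReal 0 v).map (fun x => c * x) = gaussianReal 0 v := by
          rw [gaussianReal_map_const_mul]
          congr 1
          · simp
          · ext; simp [hc]
        rw [mgf_gaussianReal h]
        simp
    have h := hsub.measure_ge_le hu
    rw [← ENNReal.ofReal_toReal (measure_ne_top (gaussianReal 0 v) _)]
    exact ENNReal.ofReal_le_ofReal h
  calc gaussianReal 0 v {x | u < |x|}
      ≤ gaussianReal 0 v ({x | u ≤ 1 * x} ∪ {x | u ≤ (-1) * x}) := by
        refine measure_mono fun x hx => ?_
        have hx : u < |x| := hx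
        rcases lt_abs.1 hx with h | h
        · exact Or.inl (show u ≤ 1 * x by linarith)
        · exact Or.inr (show u ≤ (-1) * x by linarith)
    _ ≤ _ := (measure_union_le _ _).trans (add_le_add (key 1 (by norm_num)) (key (-1) (by norm_num)))
    _ = _ := (two_mul _).symm

/-- Fernique's tail bound, with constants uniform over all centered Gaussian vectors. -/
theorem exists_fernique_tail :
    ∃ κ : ℝ, 0 < κ ∧ ∃ K : ENNReal, K ≠ ⊤ ∧ ∀ (N : ℕ) (μ : Measure (Fin N → ℝ)),
      (∀ L : StrongDual ℝ (Fin N → ℝ), ∃ v : NNReal, μ.map L = gaussianReal 0 v) →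
      ∀ a : ℝ, 3 / 4 ≤ μ {x | ‖x‖ ≤ a} → ∀ u : ℝ, 0 ≤ u →
      μ {x | u < ‖x‖} ≤ K * ENNReal.ofReal (Real.exp (-(κ * (u / a) ^ 2))) := by
  have h1 : (2 : ENNReal)⁻¹ < 3 / 4 := by
    rw [← ENNReal.toReal_lt_toReal (by finiteness) (by finiteness)]
    norm_num
  have h2 : (3 / 4 : ENNReal) < 1 := by
    rw [← ENNReal.toReal_lt_toReal (by finiteness) (by finiteness)]
    norm_num
  have h3 : ((3 / 4 : ENNReal) / (1 - 3 / 4)).toReal = 3 := by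
    rw [ENNReal.toReal_div, ENNReal.toReal_sub_of_le h2.le (by finiteness)]
    norm_num
  refine ⟨Fernique.logRatio (3 / 4), Fernique.logRatio_pos h1 h2,
    .ofReal (Real.exp (Fernique.logRatio (3 / 4))) + ∑' n : ℕ, .ofReal (Real.exp
      (-2⁻¹ * Real.log ((3 / 4 : ENNReal) / (1 - 3 / 4)).toReal * 2 ^ n)), ?_, ?_⟩
  · refine (ENNReal.add_lt_top.mpr ⟨ENNReal.ofReal_lt_top, ?_⟩).ne
    refine Summable.tsum_ofReal_lt_top <|
      Real.summable_exp_nat_mul_of_ge ?_ (fun i ↦ mod_cast (Nat.lt_pow_self (by simp)).le)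
    rw [h3]
    have := Real.log_pos (show (1 : ℝ) < 3 by norm_num)
    linarith
  · intro N μ hμ a ha u hu
    have : IsGaussian μ := isGaussian_of_map_eq_gaussianReal fun L => ⟨0, hμ L⟩
    have hrot := IsGaussian.map_rotation_eq_self_of_forall_strongDual_eq_zero (μ := μ) (fun L => by
      obtain ⟨v, hv⟩ := hμ L
      have : ∫ x, x ∂(μ.map L) = 0 := by rw [hv, integral_id_gaussianReal]
      rwa [integral_map (by fun_prop) (by fun_prop)] at this) (-(Real.pi / 4))
    have hexp := lintegral_exp_mul_sq_norm_le_of_map_rotation_eq_self hrot ha h1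
    set κ := Fernique.logRatio (3 / 4)
    have hκ : 0 < κ := Fernique.logRatio_pos h1 h2
    have hmk := mul_meas_ge_le_lintegral (μ := μ)
      (f := fun x => ENNReal.ofReal (Real.exp (κ * a⁻¹ ^ 2 * ‖x‖ ^ 2))) (by fun_prop)
      (ENNReal.ofReal (Real.exp (κ * (u / a) ^ 2)))
    rw [Real.exp_neg, ENNReal.ofReal_inv_of_pos (Real.exp_pos _), ← div_eq_mul_inv,
      ENNReal.le_div_iff_mul_le (by left; simp [Real.exp_pos]) (by left; finiteness), mul_comm]
    refine le_trans ?_ (hmk.trans hexp)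
    gcongr with x
    intro hx
    refine ENNReal.ofReal_le_ofReal (Real.exp_le_exp.2 ?_)
    rw [mul_assoc, ← mul_pow, inv_mul_eq_div, div_pow, div_pow]
    gcongr

theorem exists_measure_oscillation_ge {Ω : Type*} [MeasurableSpace Ω] (P : Measure Ω)
    [IsProbabilityMeasure P] (X : ℝ → Ω → ℝ)
    (hcont : ∀ᵐ ω ∂P, ContinuousOn (fun t => X t ω) (Set.Ioi (0 : ℝ))) {a : ℝ} (ha : 0 < a) :
    ∃ δ : ℝ, 0 < δ ∧ ∀ b ≤ 1 + δ,
      3 / 4 ≤ P {ω | ∀ t ∈ Set.Icc 1 b, |X t ω - X 1 ω| ≤ a} := by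
  let A : ℕ → Set Ω := fun k => {ω | ∀ t ∈ Set.Icc (1 : ℝ) (1 + 1 / (k + 1)), |X t ω - X 1 ω| ≤ a}
  have hA : Monotone A := by
    intro k l hkl ω hω t ht
    refine hω t ⟨ht.1, ht.2.trans ?_⟩
    gcongr
  have hU : P (⋃ k, A k) = 1 := by
    rw [← measure_univ (μ := P)]
    refine measure_congr ?_
    filter_upwards [hcont] with ω hω
    apply propext
    refine iff_of_true ?_ trivial
    have h1 : ContinuousAt (fun t => X t ω) 1 := hω.continuousAt (Ioi_mem_nhds one_pos)
    obtain ⟨d, hd, h⟩ := Metric.continuousAt_iff.1 h1 a ha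
    obtain ⟨k, hk⟩ := exists_nat_one_div_lt hd
    refine Set.mem_iUnion.2 ⟨k, fun t ht => ?_⟩
    have := h (x := t) (by
      rw [Real.dist_eq, abs_of_nonneg (by linarith [ht.1])]; linarith [ht.2])
    exact this.le
  have ht := tendsto_measure_iUnion_atTop (μ := P) hA
  rw [hU] at ht
  have h2 : (3 / 4 : ENNReal) < 1 := by
    rw [← ENNReal.toReal_lt_toReal (by finiteness) (by finiteness)]
    norm_num
  obtain ⟨k, hk⟩ := (ht.eventually (lt_mem_nhds h2)).exists
  refine ⟨1 / (k + 1), by positivity, fun b hb => hk.le.trans (measure_mono fun ω hω t ht => ?_)⟩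
  exact hω t ⟨ht.1, ht.2.trans hb⟩

theorem measurableSet_exists_lt_abs {N : ℕ} (c : ℝ) :
    MeasurableSet {x : Fin N → ℝ | ∃ i, c < |x i|} := by
  rw [Set.ofPred_exists]
  exact MeasurableSet.iUnion fun i => measurableSet_lt (by fun_prop) (by fun_prop)

theorem measure_exists_lt_abs_sub_le {Ω : Type*} [MeasurableSpace Ω] (P : Measure Ω)
    (X : ℝ → Ω → ℝ) (hmeas : ∀ t : ℝ, 0 < t → Measurable (X t))
    (hgauss : ∀ (n : ℕ) (t : Fin n → ℝ), (∀ i, 0 < t i) → ∀ c : Fin n → ℝ,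
      ∃ v : NNReal, P.map (fun ω => ∑ i, c i * X (t i) ω) = gaussianReal 0 v)
    {κ : ℝ} {K : ENNReal} (hK : ∀ (N : ℕ) (μ : Measure (Fin N → ℝ)),
      (∀ L : StrongDual ℝ (Fin N → ℝ), ∃ v : NNReal, μ.map L = gaussianReal 0 v) →
      ∀ a : ℝ, 3 / 4 ≤ μ {x | ‖x‖ ≤ a} → ∀ u : ℝ, 0 ≤ u →
      μ {x | u < ‖x‖} ≤ K * ENNReal.ofReal (Real.exp (-(κ * (u / a) ^ 2))))
    {N : ℕ} (q : Fin N → ℝ) (hq : ∀ i, 0 < q i) {a : ℝ} (ha : 0 ≤ a)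
    (hP : 3 / 4 ≤ P {ω | ∀ i, |X (q i) ω - X 1 ω| ≤ a}) {u : ℝ} (hu : 0 ≤ u) :
    P {ω | ∃ i, u < |X (q i) ω - X 1 ω|} ≤
      K * ENNReal.ofReal (Real.exp (-(κ * (u / a) ^ 2))) := by
  have hZ : Measurable (fun ω => fun i => X (q i) ω - X 1 ω) :=
    measurable_pi_lambda _ fun i => (hmeas _ (hq i)).sub (hmeas 1 one_pos)
  have h := hK N (P.map (fun ω => fun i => X (q i) ω - X 1 ω)) (fun L => ?_) a ?_ u hu
  · rw [Measure.map_apply hZ (measurableSet_lt (by fun_prop) (by fun_prop))] at h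
    refine le_trans (measure_mono ?_) h
    rintro ω ⟨i, hi⟩
    have hi : u < ‖X (q i) ω - X 1 ω‖ := hi
    exact hi.trans_le (norm_le_pi_norm (fun i => X (q i) ω - X 1 ω) i)
  · obtain ⟨v, hv⟩ := hgauss (N + 1) (Fin.cons 1 q)
      (fun i => by refine Fin.cases ?_ (fun j => ?_) i <;> simp [hq])
      (Fin.cons (-∑ i, L (fun j => if i = j then 1 else 0))
        fun i => L (fun j => if i = j then 1 else 0))
    refine ⟨v, ?_⟩
    rw [← hv, Measure.map_map (by fun_prop) hZ]
    congr 1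
    ext ω
    have hL := LinearMap.pi_apply_eq_sum_univ (L : (Fin N → ℝ) →ₗ[ℝ] ℝ)
      (fun i => X (q i) ω - X 1 ω)
    rw [ContinuousLinearMap.coe_coe] at hL
    rw [Function.comp_apply, hL, Fin.sum_univ_succ]
    simp only [Fin.cons_zero, Fin.cons_succ, smul_eq_mul, sub_mul, Finset.sum_sub_distrib,
      neg_mul, Finset.sum_mul]
    rw [neg_add_eq_sub]
    congr 1
    · exact Finset.sum_congr rfl fun i _ => mul_comm _ _
    · exact Finset.sum_congr rfl fun i _ => mul_comm _ _
  · rw [Measure.map_apply hZ (measurableSet_le (by fun_prop) (by fun_prop))]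
    refine hP.trans (measure_mono fun ω hω => ?_)
    exact (pi_norm_le_iff_of_nonneg ha).2 hω

theorem measure_exists_lt_abs_scaled_le {Ω : Type*} [MeasurableSpace Ω] (P : Measure Ω)
    (X : ℝ → Ω → ℝ) (ρ : ℝ) (hmeas : ∀ t : ℝ, 0 < t → Measurable (X t))
    (hcont : ∀ᵐ ω ∂P, ContinuousOn (fun t => X t ω) (Set.Ioi (0 : ℝ)))
    (hss : ∀ a : ℝ, 0 < a → ∀ (n : ℕ) (t : Fin n → ℝ), (∀ i, 0 < t i) →
      P.map (fun ω => fun i => X (a * t i) ω) = P.map (fun ω => fun i => a ^ ρ * X (t i) ω))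
    {b u s : ℝ} (hb : 1 ≤ b) (hs : 0 < s) {B : ENNReal}
    (hB : ∀ (N : ℕ) (q : Fin N → ℝ), (∀ i, q i ∈ Set.Icc 1 b) →
      P {ω | ∃ i, u < |X (q i) ω|} ≤ B) :
    P {ω | ∃ t ∈ Set.Icc s (s * b), s ^ ρ * u < |X t ω|} ≤ B := by
  have : Nonempty (Set.Icc (1 : ℝ) b) := ⟨⟨1, le_rfl, hb⟩⟩
  set q := TopologicalSpace.denseSeq (Set.Icc (1 : ℝ) b)
  let A : ℕ → Set Ω := fun N => {ω | ∃ i : Fin N, s ^ ρ * u < |X (s * q i) ω|}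
  have hq0 : ∀ n, 0 < (q n : ℝ) := fun n => one_pos.trans_le (q n).2.1
  have hmono : Monotone A := by
    rintro N M hNM ω ⟨i, hi⟩
    exact ⟨Fin.castLE hNM i, hi⟩
  have hsρ : 0 < s ^ ρ := Real.rpow_pos_of_pos hs ρ
  calc P {ω | ∃ t ∈ Set.Icc s (s * b), s ^ ρ * u < |X t ω|} ≤ P (⋃ N, A N) := by
        refine measure_mono_ae ?_
        filter_upwards [hcont] with ω hω
        intro h
        by_contra hn
        obtain ⟨t, ht, htu⟩ : ∃ t ∈ Set.Icc s (s * b), s ^ ρ * u < |X t ω| := h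
        have hle : ∀ n, |X (s * q n) ω| ≤ s ^ ρ * u := by
          intro n
          by_contra! hlt
          exact hn (Set.mem_iUnion.2 ⟨n + 1, ⟨⟨n, n.lt_succ_self⟩, hlt⟩⟩)
        have hc : Continuous fun x : Set.Icc (1 : ℝ) b => X (s * x) ω :=
          hω.comp_continuous (f := fun x : Set.Icc (1 : ℝ) b => s * (x : ℝ)) (by fun_prop)
            fun x => mul_pos hs (one_pos.trans_le x.2.1)
        have hall : ∀ x : Set.Icc (1 : ℝ) b, |X (s * x) ω| ≤ s ^ ρ * u := fun x =>
          DenseRange.induction_on (TopologicalSpace.denseRange_denseSeq (Set.Icc (1 : ℝ) b)) x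
            (isClosed_le hc.abs continuous_const) hle
        have := hall ⟨t / s, (one_le_div hs).2 ht.1, (div_le_iff₀ hs).2 (by linarith [ht.2])⟩
        rw [mul_div_cancel₀ _ hs.ne'] at this
        exact this.not_gt htu
    _ = ⨆ N, P (A N) := hmono.measure_iUnion
    _ ≤ B := by
        refine iSup_le fun N => ?_
        have hset := measurableSet_exists_lt_abs (N := N) (s ^ ρ * u)
        have h := congrArg (fun μ => μ {x : Fin N → ℝ | ∃ i, s ^ ρ * u < |x i|})
          (hss s hs N (fun i => q i) fun i => hq0 i)
        rw [Measure.map_apply (measurable_pi_lambda (fun ω (i : Fin N) => X (s * q i) ω)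
            fun i => hmeas _ (mul_pos hs (hq0 i))) hset,
          Measure.map_apply (measurable_pi_lambda (fun ω (i : Fin N) => s ^ ρ * X (q i) ω)
            fun i => (hmeas _ (hq0 i)).const_mul _) hset] at h
        refine (h.trans_le (measure_mono ?_)).trans (hB N (fun i => q i) fun i => (q i).2)
        rintro ω ⟨i, hi⟩
        refine ⟨i, ?_⟩
        simp only [abs_mul, abs_of_pos hsρ] at hi
        exact lt_of_mul_lt_mul_left hi hsρ.le

theorem exists_tail_sup {Ω : Type*} [MeasurableSpace Ω] (P : Measure Ω) [IsProbabilityMeasure P]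
    (X : ℝ → Ω → ℝ) (ρ σ : ℝ) (hσ : 0 < σ)
    (hmeas : ∀ t : ℝ, 0 < t → Measurable (X t))
    (hcont : ∀ᵐ ω ∂P, ContinuousOn (fun t => X t ω) (Set.Ioi (0 : ℝ)))
    (hgauss : ∀ (n : ℕ) (t : Fin n → ℝ), (∀ i, 0 < t i) → ∀ c : Fin n → ℝ,
      ∃ v : NNReal, P.map (fun ω => ∑ i, c i * X (t i) ω) = gaussianReal 0 v)
    (hss : ∀ a : ℝ, 0 < a → ∀ (n : ℕ) (t : Fin n → ℝ), (∀ i, 0 < t i) →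
      P.map (fun ω => fun i => X (a * t i) ω) = P.map (fun ω => fun i => a ^ ρ * X (t i) ω))
    (hvar : ∫ ω, (X 1 ω) ^ 2 ∂P = σ ^ 2) {ε : ℝ} (hε : 0 < ε) (hε1 : ε < 1) :
    ∃ δ : ℝ, 0 < δ ∧ ∃ C : ENNReal, C ≠ ⊤ ∧ ∀ b, 1 ≤ b → b ≤ 1 + δ → ∀ s u, 0 < s → 0 ≤ u →
      P {ω | ∃ t ∈ Set.Icc s (s * b), s ^ ρ * u < |X t ω|} ≤
        C * ENNReal.ofReal (Real.exp (-((1 - ε) * u) ^ 2 / (2 * σ ^ 2))) := by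
  obtain ⟨κ, hκ, K, hKtop, hK⟩ := exists_fernique_tail
  set a : ℝ := ε * σ * √(2 * κ) with ha_def
  have ha : 0 < a := by positivity
  have ha2 : a ^ 2 = ε ^ 2 * σ ^ 2 * (2 * κ) := by
    rw [ha_def, mul_pow, mul_pow, Real.sq_sqrt (by positivity)]
  obtain ⟨δ, hδ, hosc⟩ := exists_measure_oscillation_ge P X hcont ha
  obtain ⟨v, hv⟩ := hgauss 1 (fun _ => 1) (fun _ => one_pos) (fun _ => 1)
  simp only [Finset.univ_unique, one_mul, Finset.sum_const, Finset.card_singleton, one_smul] at hv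
  have hX1 := hmeas 1 one_pos
  have hvσ : (v : ℝ) = σ ^ 2 := by
    rw [← hvar, ← integral_map (φ := X 1) (f := fun x => x ^ 2) hX1.aemeasurable (by fun_prop)]
    change _ = ∫ x, x ^ 2 ∂(P.map fun ω => X 1 ω)
    rw [hv, ← variance_of_integral_eq_zero (X := fun x => x) (by fun_prop)
      integral_id_gaussianReal, variance_fun_id_gaussianReal]
  refine ⟨δ, hδ, 2 + K, by finiteness, fun b hb1 hb s u hs hu => ?_⟩
  refine measure_exists_lt_abs_scaled_le P X ρ hmeas hcont hss hb1 hs fun N q hq => ?_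
  have hfirst : P {ω | (1 - ε) * u < |X 1 ω|} ≤
      2 * ENNReal.ofReal (Real.exp (-((1 - ε) * u) ^ 2 / (2 * σ ^ 2))) := by
    have h := gaussianReal_zero_abs_tail v (u := (1 - ε) * u)
      (mul_nonneg (by linarith) hu)
    rwa [← hv, Measure.map_apply hX1 (measurableSet_lt (by fun_prop) (by fun_prop)), hvσ] at h
  have hsecond : P {ω | ∃ i, ε * u < |X (q i) ω - X 1 ω|} ≤
      K * ENNReal.ofReal (Real.exp (-((1 - ε) * u) ^ 2 / (2 * σ ^ 2))) := by
    refine (measure_exists_lt_abs_sub_le P X hmeas hgauss hK q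
      (fun i => one_pos.trans_le (hq i).1) ha.le ((hosc b hb).trans
        (measure_mono fun ω hω i => hω _ (hq i))) (u := ε * u) (by positivity)).trans ?_
    gcongr
    rw [div_pow, ha2, show κ * ((ε * u) ^ 2 / (ε ^ 2 * σ ^ 2 * (2 * κ))) = u ^ 2 / (2 * σ ^ 2) by
      field_simp, neg_div, mul_pow]
    gcongr
    nlinarith [sq_nonneg u, mul_nonneg (mul_nonneg hε.le (by linarith : 0 ≤ 2 - ε)) (sq_nonneg u)]
  calc P {ω | ∃ i, u < |X (q i) ω|}
      ≤ P ({ω | (1 - ε) * u < |X 1 ω|} ∪ {ω | ∃ i, ε * u < |X (q i) ω - X 1 ω|}) := by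
        refine measure_mono ?_
        rintro ω ⟨i, hi⟩
        by_contra hn
        rw [Set.mem_union, not_or] at hn
        have h1 : |X 1 ω| ≤ (1 - ε) * u := not_lt.1 hn.1
        have h2 : |X (q i) ω - X 1 ω| ≤ ε * u := not_lt.1 fun h => hn.2 ⟨i, h⟩
        have h3 := abs_add_le (X (q i) ω - X 1 ω) (X 1 ω)
        rw [sub_add_cancel] at h3
        linarith
    _ ≤ _ := (measure_union_le _ _).trans (add_le_add hfirst hsecond)
    _ = _ := (add_mul _ _ _).symm

theorem ae_eventually_abs_le {Ω : Type*} [MeasurableSpace Ω] (P : Measure Ω)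
    [IsProbabilityMeasure P] (X : ℝ → Ω → ℝ) (ρ σ : ℝ) (hσ : 0 < σ)
    (hmeas : ∀ t : ℝ, 0 < t → Measurable (X t))
    (hcont : ∀ᵐ ω ∂P, ContinuousOn (fun t => X t ω) (Set.Ioi (0 : ℝ)))
    (hgauss : ∀ (n : ℕ) (t : Fin n → ℝ), (∀ i, 0 < t i) → ∀ c : Fin n → ℝ,
      ∃ v : NNReal, P.map (fun ω => ∑ i, c i * X (t i) ω) = gaussianReal 0 v)
    (hss : ∀ a : ℝ, 0 < a → ∀ (n : ℕ) (t : Fin n → ℝ), (∀ i, 0 < t i) →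
      P.map (fun ω => fun i => X (a * t i) ω) = P.map (fun ω => fun i => a ^ ρ * X (t i) ω))
    (hvar : ∫ ω, (X 1 ω) ^ 2 ∂P = σ ^ 2) {η : ℝ} (hη : 0 < η) :
    ∀ᵐ ω ∂P, ∀ᶠ t : ℝ in atTop,
      |X t ω| ≤ (1 + η) ^ 2 * σ * (t ^ ρ * √(2 * Real.log (Real.log t))) := by
  have hε1 : η / (2 * (1 + η)) < 1 := by
    rw [div_lt_one (by positivity)]; linarith
  obtain ⟨δ, hδ, C, hC, htail⟩ := exists_tail_sup P X ρ σ hσ hmeas hcont hgauss hss hvar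
    (ε := η / (2 * (1 + η))) (by positivity) hε1
  obtain ⟨b, hb1, hbδ, hbη⟩ : ∃ b : ℝ, 1 < b ∧ b ≤ 1 + δ ∧ b ^ |ρ| ≤ 1 + η := by
    have hct : ContinuousAt (fun b : ℝ => b ^ |ρ|) 1 :=
      Real.continuousAt_rpow_const _ _ (Or.inl one_ne_zero)
    have h1 : ∀ᶠ b : ℝ in nhds 1, b ^ |ρ| < 1 + η :=
      hct.eventually (gt_mem_nhds (by simpa using hη))
    have h2 : ∀ᶠ b : ℝ in nhds 1, b < 1 + δ := gt_mem_nhds (by linarith)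
    obtain ⟨b, hb, hb'⟩ := (((h1.and h2).filter_mono nhdsWithin_le_nhds).and
      (self_mem_nhdsWithin (s := Set.Ioi (1 : ℝ)))).exists
    exact ⟨b, hb', hb.2.le, hb.1.le⟩
  have hb0 : 0 < b := one_pos.trans hb1
  have hlb : 0 < Real.log b := Real.log_pos hb1
  obtain ⟨k₀, hk₀⟩ := exists_nat_gt (1 / Real.log b)
  have hk₀' : ∀ k : ℕ, k₀ ≤ k → 1 ≤ k * Real.log b := fun k hk => by
    rw [← div_le_iff₀ hlb]
    exact hk₀.le.trans (by exact_mod_cast hk)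
  let u : ℕ → ℝ := fun k => (1 + η) * σ * √(2 * Real.log (k * Real.log b))
  let E : ℕ → Set Ω := fun k => {ω | ∃ t ∈ Set.Icc (b ^ k) (b ^ k * b), (b ^ k) ^ ρ * u k < |X t ω|}
  have hE : ∀ k, k₀ ≤ k → P (E k) ≤
      C * ENNReal.ofReal ((k : ℝ) ^ (-(1 + η / 2) ^ 2) * (Real.log b) ^ (-(1 + η / 2) ^ 2)) := by
    intro k hk
    have hk1 := hk₀' k hk
    refine (htail b hb1.le hbδ (b ^ k) (u k) (by positivity) (by positivity)).trans_eq ?_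
    congr 2
    rw [← Real.mul_rpow (Nat.cast_nonneg k) hlb.le, Real.rpow_def_of_pos (by linarith)]
    congr 1
    simp only [u]
    rw [mul_pow, mul_pow, Real.sq_sqrt (by have := Real.log_nonneg hk1; positivity)]
    field_simp
    ring
  have hsum : ∑' k, P (E (k + k₀)) ≠ ⊤ := by
    have h1 : Summable fun k : ℕ => ((k + k₀ : ℕ) : ℝ) ^ (-(1 + η / 2) ^ 2) *
        (Real.log b) ^ (-(1 + η / 2) ^ 2) :=
      ((summable_nat_add_iff k₀).2 (Real.summable_nat_rpow.2 (by nlinarith))).mul_right _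
    refine ne_top_of_le_ne_top ?_ (ENNReal.tsum_le_tsum fun k => hE (k + k₀) (by omega))
    rw [ENNReal.tsum_mul_left]
    exact ENNReal.mul_ne_top hC h1.tsum_ofReal_ne_top
  filter_upwards [ae_eventually_notMem hsum] with ω hω
  obtain ⟨k₁, hk₁⟩ := eventually_atTop.1 hω
  have hfloor : Tendsto (fun t : ℝ => ⌊Real.log t / Real.log b⌋₊) atTop atTop :=
    tendsto_nat_floor_atTop.comp (Real.tendsto_log_atTop.atTop_div_const hlb)
  filter_upwards [hfloor.eventually_ge_atTop (k₁ + k₀), eventually_ge_atTop 1] with t htk ht1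
  have ht0 : 0 < t := by linarith
  set k := ⌊Real.log t / Real.log b⌋₊
  have hk1 := hk₀' k (by omega)
  have hkl : k * Real.log b ≤ Real.log t :=
    (le_div_iff₀ hlb).1 (Nat.floor_le (div_nonneg (Real.log_nonneg ht1) hlb.le))
  have hku : Real.log t < (k + 1) * Real.log b := (div_lt_iff₀ hlb).1 (Nat.lt_floor_add_one _)
  have hbk : 0 < b ^ k := by positivity
  have hl : b ^ k ≤ t := by
    rw [← Real.log_le_log_iff hbk ht0, Real.log_pow]; exact hkl
  have hr : t ≤ b ^ k * b := by
    rw [← Real.log_le_log_iff ht0 (by positivity), ← pow_succ, Real.log_pow]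
    exact_mod_cast hku.le
  have hX : |X t ω| ≤ (b ^ k) ^ ρ * u k := by
    by_contra! h
    have := hk₁ (k - k₀) (by omega)
    rw [Nat.sub_add_cancel (by omega)] at this
    exact this ⟨t, ⟨hl, hr⟩, h⟩
  have hpow : (b ^ k) ^ ρ ≤ t ^ ρ * (1 + η) := by
    have h1 : 1 ≤ t / b ^ k := (one_le_div hbk).2 hl
    calc (b ^ k) ^ ρ = t ^ ρ * (t / b ^ k) ^ (-ρ) := by
          rw [Real.div_rpow ht0.le hbk.le, Real.rpow_neg ht0.le, Real.rpow_neg hbk.le]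
          have := (Real.rpow_pos_of_pos ht0 ρ).ne'
          field_simp
      _ ≤ t ^ ρ * (1 + η) := by
          gcongr
          calc (t / b ^ k) ^ (-ρ) ≤ (t / b ^ k) ^ |ρ| :=
                Real.rpow_le_rpow_of_exponent_le h1 (neg_le_abs ρ)
            _ ≤ b ^ |ρ| := by
                gcongr
                exact (div_le_iff₀ hbk).2 (by linarith)
            _ ≤ 1 + η := hbη
  calc |X t ω| ≤ (b ^ k) ^ ρ * u k := hX
    _ ≤ (t ^ ρ * (1 + η)) * ((1 + η) * σ * √(2 * Real.log (Real.log t))) := by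
        simp only [u]
        gcongr
    _ = _ := by ring

/-- Theorem 2.1: asymptotic growth of a continuous self-similar centered Gaussian
process.  -/
theorem stmt_0 {Ω : Type*} [MeasurableSpace Ω] (P : Measure Ω) [IsProbabilityMeasure P]
    (X : ℝ → Ω → ℝ) (ρ σ : ℝ) (hσ : 0 < σ)
    (hmeas : ∀ t : ℝ, 0 < t → Measurable (X t))
    (hcont : ∀ᵐ ω ∂P, ContinuousOn (fun t => X t ω) (Set.Ioi (0 : ℝ)))
    (hgauss : ∀ (n : ℕ) (t : Fin n → ℝ), (∀ i, 0 < t i) → ∀ c : Fin n → ℝ,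
      ∃ v : NNReal, P.map (fun ω => ∑ i, c i * X (t i) ω) = gaussianReal 0 v)
    (hss : ∀ a : ℝ, 0 < a → ∀ (n : ℕ) (t : Fin n → ℝ), (∀ i, 0 < t i) →
      P.map (fun ω => fun i => X (a * t i) ω) = P.map (fun ω => fun i => a ^ ρ * X (t i) ω))
    (hvar : ∫ ω, (X 1 ω) ^ 2 ∂P = σ ^ 2) :
    (∀ᵐ ω ∂P, limsup (fun t : ℝ =>
        |X t ω| / (t ^ ρ * Real.sqrt (2 * Real.log (Real.log t)))) atTop ≤ σ)
    ∧ (∀ᵐ ω ∂P, ∃ M : ℝ, ∀ t : ℝ, 3 ≤ t →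
        |X t ω| / (t ^ ρ * Real.sqrt (Real.log (Real.log t))) ≤ M) := by
  have hev : ∀ η : ℝ, 0 < η → _ := fun η hη =>
    ae_eventually_abs_le P X ρ σ hσ hmeas hcont hgauss hss hvar hη
  constructor
  · have hall := ae_all_iff.2 fun n : ℕ => hev (1 / ((n : ℝ) + 1)) (by positivity)
    filter_upwards [hall] with ω hω
    have hlim : Tendsto (fun n : ℕ => (1 + 1 / ((n : ℝ) + 1)) ^ 2 * σ) atTop (nhds σ) := by
      have := ((tendsto_one_div_add_atTop_nhds_zero_nat (𝕜 := ℝ)).const_add 1).pow 2 |>.mul_const σ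
      simpa using this
    refine ge_of_tendsto' hlim fun n => limsup_le_of_le ?_ ?_
    · refine (isBoundedUnder_of_eventually_ge (a := 0) ?_).isCoboundedUnder_le
      filter_upwards [eventually_ge_atTop 0] with t ht
      positivity
    · filter_upwards [hω n, eventually_ge_atTop 0] with t ht ht0
      exact div_le_of_le_mul₀ (by positivity) (by positivity) ht
  · filter_upwards [hev 1 one_pos, hcont] with ω hω hc
    obtain ⟨T, hT⟩ := eventually_atTop.1 hω
    have hlog : ∀ t : ℝ, 3 ≤ t → 1 < Real.log t := fun t ht =>
      (Real.lt_log_iff_exp_lt (by linarith)).2 (Real.exp_one_lt_three.trans_le ht)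
    have hcf : ContinuousOn
        (fun t => |X t ω| / (t ^ ρ * √(Real.log (Real.log t)))) (Set.Icc 3 T) := by
      intro t ht
      have ht0 : 0 < t := by linarith [ht.1]
      have hl := hlog t ht.1
      have hX : ContinuousAt (fun t => X t ω) t := hc.continuousAt (Ioi_mem_nhds ht0)
      have hden : ContinuousAt (fun t => t ^ ρ * √(Real.log (Real.log t))) t :=
        (Real.continuousAt_rpow_const _ _ (Or.inl ht0.ne')).mul
          (((Real.continuousAt_log ht0.ne').log (by linarith)).sqrt)
      have hne : t ^ ρ * √(Real.log (Real.log t)) ≠ 0 :=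
        (mul_pos (Real.rpow_pos_of_pos ht0 ρ) (Real.sqrt_pos.2 (Real.log_pos hl))).ne'
      exact (hX.abs.div hden hne).continuousWithinAt
    obtain ⟨M, hM⟩ := isCompact_Icc.bddAbove_image hcf
    refine ⟨max M ((1 + 1) ^ 2 * σ * √2), fun t ht => ?_⟩
    rcases le_total t T with h | h
    · exact (hM ⟨t, ⟨ht, h⟩, rfl⟩).trans (le_max_left _ _)
    · refine le_trans ?_ (le_max_right _ _)
      have ht0 : 0 < t := by linarith
      refine div_le_of_le_mul₀ (by positivity) (by positivity) ((hT t h).trans_eq ?_)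
      rw [Real.sqrt_mul zero_le_two]
      ring
end

section
/- Let α, β, γ be real numbers with α > -1/2, γ > -1 and α + β + γ > -3/2, and suppose β + γ ≥ −1. For t ≥ 1 define F(t) = ∫₀¹ s^{2α} (∫ₛ¹ u^β (u−s)^γ du) (∫ₜ^{t+1} v^β (v−s)^γ dv) ds. Then the series ∑_{n=1}^∞ F(n) diverges to +∞ and the integral ∫₁^∞ F(t) dt is infinite. -/
open MeasureTheory Filter intervalIntegral

/-- On `[u / 2, u]` the power `x ^ r` is comparable to `u ^ r`. -/
lemma exists_rpow_comparable (r : ℝ) : ∃ c C : ℝ, 0 < c ∧ 0 < C ∧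
    ∀ u x : ℝ, 0 < u → u / 2 ≤ x → x ≤ u → c * u ^ r ≤ x ^ r ∧ x ^ r ≤ C * u ^ r := by
  have hhalf : ∀ u : ℝ, 0 < u → (u / 2) ^ r = (1 / 2 : ℝ) ^ r * u ^ r := fun u hu => by
    rw [← Real.mul_rpow (by norm_num) hu.le]; congr 1; ring
  have hpos : (0 : ℝ) < (1 / 2 : ℝ) ^ r := by positivity
  rcases le_total 0 r with hr | hr
  · refine ⟨(1 / 2) ^ r, 1, hpos, one_pos, fun u x hu h1 h2 => ⟨?_, ?_⟩⟩
    · rw [← hhalf u hu]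
      exact Real.rpow_le_rpow (by positivity) h1 hr
    · rw [one_mul]
      exact Real.rpow_le_rpow (by linarith) h2 hr
  · refine ⟨1, (1 / 2) ^ r, one_pos, hpos, fun u x hu h1 h2 => ⟨?_, ?_⟩⟩
    · rw [one_mul]
      exact Real.rpow_le_rpow_of_nonpos (by linarith) h2 hr
    · rw [← hhalf u hu]
      exact Real.rpow_le_rpow_of_nonpos (by positivity) h1 hr

lemma exists_exponent_shift {p q : ℝ} (hp : -1 < p) (hpq : -2 < p + q) :
    ∃ δ : ℝ, 0 ≤ δ ∧ -1 < p - δ ∧ -1 < q + δ := by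
  rcases le_total 0 ((p - q) / 2) with h | h
  · exact ⟨(p - q) / 2, h, by linarith, by linarith⟩
  · exact ⟨0, le_rfl, by linarith, by linarith⟩

lemma rpow_mul_rpow_le_shift {p q δ x y : ℝ} (hδ : 0 ≤ δ) (hx : 0 < x) (hxy : x ≤ y) :
    x ^ p * y ^ q ≤ x ^ (p - δ) * y ^ (q + δ) := by
  have hy : 0 < y := hx.trans_le hxy
  calc x ^ p * y ^ q = x ^ (p - δ) * x ^ δ * y ^ q := by
        rw [← Real.rpow_add hx]; congr 2; ring
    _ ≤ x ^ (p - δ) * y ^ δ * y ^ q := by gcongr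
    _ = x ^ (p - δ) * y ^ (q + δ) := by rw [Real.rpow_add hy]; ring

lemma integrable_indicator_Ioo_rpow {r : ℝ} (hr : -1 < r) :
    Integrable ((Set.Ioo (0 : ℝ) 1).indicator fun x => x ^ r) := by
  rw [integrable_indicator_iff measurableSet_Ioo]
  exact (integrableOn_Ioo_rpow_iff one_pos).2 hr

/-- The kernel `s ^ a * u ^ b * (u - s) ^ c` on the open triangle `0 < s < u < 1`. -/
noncomputable def triangleKernel (a b c : ℝ) : ℝ × ℝ → ℝ :=
  Set.indicator {p : ℝ × ℝ | 0 < p.1 ∧ p.1 < p.2 ∧ p.2 < 1}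
    fun p => p.1 ^ a * p.2 ^ b * (p.2 - p.1) ^ c

lemma isOpen_triangle : IsOpen {p : ℝ × ℝ | 0 < p.1 ∧ p.1 < p.2 ∧ p.2 < 1} :=
  (isOpen_lt continuous_const continuous_fst).inter
    ((isOpen_lt continuous_fst continuous_snd).inter (isOpen_lt continuous_snd continuous_const))

lemma triangleKernel_nonneg (a b c : ℝ) : 0 ≤ triangleKernel a b c := by
  refine fun p => Set.indicator_nonneg (fun p hp => ?_) p
  obtain ⟨h0, h1, -⟩ := hp
  have := h0.trans h1
  have := sub_pos.2 h1
  positivity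

lemma measurable_triangleKernel (a b c : ℝ) : Measurable (triangleKernel a b c) := by
  refine Measurable.indicator ?_ isOpen_triangle.measurableSet
  fun_prop

lemma integrable_triangleKernel {a b c : ℝ} (ha : -1 < a) (hc : -1 < c) (habc : -2 < a + b + c) :
    Integrable (triangleKernel a b c) (volume.prod volume) := by
  obtain ⟨_, C₁, _, hC₁, H₁⟩ := exists_rpow_comparable c
  obtain ⟨_, C₂, _, hC₂, H₂⟩ := exists_rpow_comparable a
  obtain ⟨δ, hδ, hδ₁, hδ₂⟩ := exists_exponent_shift (p := a) (q := b + c) ha (by linarith)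
  obtain ⟨ε, hε, hε₁, hε₂⟩ := exists_exponent_shift (p := c) (q := b + a) hc (by linarith)
  have I₁ := (integrable_indicator_Ioo_rpow hδ₁).mul_prod (integrable_indicator_Ioo_rpow hδ₂)
  have I₂ := (integrable_indicator_Ioo_rpow hε₂).convolution_integrand
    (ContinuousLinearMap.mul ℝ ℝ) (integrable_indicator_Ioo_rpow hε₁).comp_neg
  refine ((I₁.const_mul C₁).add (I₂.const_mul C₂)).mono'
    (measurable_triangleKernel a b c).aestronglyMeasurable (.of_forall fun p => ?_)
  rw [Real.norm_of_nonneg (triangleKernel_nonneg a b c p)]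
  have ind_nonneg : ∀ r x : ℝ, 0 ≤ (Set.Ioo (0 : ℝ) 1).indicator (fun x => x ^ r) x :=
    fun r => Set.indicator_nonneg fun x hx => Real.rpow_nonneg hx.1.le _
  have n₁ := mul_nonneg hC₁.le (mul_nonneg (ind_nonneg (a - δ) p.1) (ind_nonneg (b + c + δ) p.2))
  have n₂ := mul_nonneg hC₂.le
    (mul_nonneg (ind_nonneg (b + a + ε) p.2) (ind_nonneg (c - ε) (p.2 - p.1)))
  simp only [Pi.add_apply, ContinuousLinearMap.mul_apply', neg_sub]
  by_cases hp : 0 < p.1 ∧ p.1 < p.2 ∧ p.2 < 1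
  · obtain ⟨h0, h1, h2⟩ := hp
    have hu : 0 < p.2 := h0.trans h1
    have hd : 0 < p.2 - p.1 := sub_pos.2 h1
    have hval : triangleKernel a b c p = p.1 ^ a * p.2 ^ b * (p.2 - p.1) ^ c :=
      Set.indicator_of_mem (s := {p : ℝ × ℝ | 0 < p.1 ∧ p.1 < p.2 ∧ p.2 < 1}) ⟨h0, h1, h2⟩ _
    have m1 : p.1 ∈ Set.Ioo (0 : ℝ) 1 := ⟨h0, by linarith⟩
    have m2 : p.2 ∈ Set.Ioo (0 : ℝ) 1 := ⟨hu, h2⟩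
    have m3 : p.2 - p.1 ∈ Set.Ioo (0 : ℝ) 1 := ⟨hd, by linarith⟩
    rw [Set.indicator_of_mem m1, Set.indicator_of_mem m2] at n₁ ⊢
    rw [Set.indicator_of_mem m2, Set.indicator_of_mem m3] at n₂ ⊢
    rw [hval]
    rcases le_total p.1 (p.2 / 2) with hs | hs
    · refine le_trans ?_ (le_add_of_nonneg_right n₂)
      calc p.1 ^ a * p.2 ^ b * (p.2 - p.1) ^ c ≤ p.1 ^ a * p.2 ^ b * (C₁ * p.2 ^ c) := by
            gcongr
            exact (H₁ _ _ hu (by linarith) (by linarith)).2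
        _ = C₁ * (p.1 ^ a * p.2 ^ (b + c)) := by rw [Real.rpow_add hu]; ring
        _ ≤ _ := mul_le_mul_of_nonneg_left (rpow_mul_rpow_le_shift hδ h0 h1.le) hC₁.le
    · refine le_trans ?_ (le_add_of_nonneg_left n₁)
      calc p.1 ^ a * p.2 ^ b * (p.2 - p.1) ^ c ≤ C₂ * p.2 ^ a * p.2 ^ b * (p.2 - p.1) ^ c := by
            gcongr
            exact (H₂ _ _ hu hs h1.le).2
        _ = C₂ * ((p.2 - p.1) ^ c * p.2 ^ (b + a)) := by rw [Real.rpow_add hu]; ring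
        _ ≤ C₂ * ((p.2 - p.1) ^ (c - ε) * p.2 ^ (b + a + ε)) :=
            mul_le_mul_of_nonneg_left
              (rpow_mul_rpow_le_shift hε hd (by linarith)) hC₂.le
        _ = _ := by ring
  · have hval : triangleKernel a b c p = 0 :=
      Set.indicator_of_notMem (s := {p : ℝ × ℝ | 0 < p.1 ∧ p.1 < p.2 ∧ p.2 < 1}) hp _
    rw [hval]
    exact add_nonneg n₁ n₂

lemma integral_triangleKernel_pos {a b c : ℝ} (ha : -1 < a) (hc : -1 < c)
    (habc : -2 < a + b + c) : 0 < ∫ p, triangleKernel a b c p ∂(volume.prod volume) := by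
  rw [integral_pos_iff_support_of_nonneg (triangleKernel_nonneg a b c)
    (integrable_triangleKernel ha hc habc)]
  refine lt_of_lt_of_le (isOpen_triangle.measure_pos (volume.prod volume)
    ⟨(1 / 3, 1 / 2), by norm_num⟩) (measure_mono fun p hp => ?_)
  rw [Function.mem_support, triangleKernel, Set.indicator_of_mem hp]
  obtain ⟨h0, h1, -⟩ := hp
  have := h0.trans h1
  have := sub_pos.2 h1
  positivity

lemma integral_triangleKernel_left (a b c : ℝ) (s : ℝ) :
    ∫ u, triangleKernel a b c (s, u) = (Set.Ioc (0 : ℝ) 1).indicator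
      (fun s => s ^ a * ∫ u in s..1, u ^ b * (u - s) ^ c) s := by
  by_cases hs : s ∈ Set.Ioc (0 : ℝ) 1
  · rw [Set.indicator_of_mem hs, integral_of_le hs.2, integral_Ioc_eq_integral_Ioo,
      ← MeasureTheory.integral_const_mul, ← MeasureTheory.integral_indicator measurableSet_Ioo]
    congr 1 with u
    simp only [triangleKernel, Set.indicator_apply, Set.mem_ofPred_eq, Set.mem_Ioo, hs.1, true_and,
      mul_assoc]
  · rw [Set.indicator_of_notMem hs, ← MeasureTheory.integral_zero ℝ ℝ]
    congr 1 with u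
    refine Set.indicator_of_notMem (fun h => hs ?_) _
    exact ⟨h.1, (h.2.1.trans h.2.2).le⟩

lemma integrableOn_rpow_mul_integral {a b c : ℝ} (ha : -1 < a) (hc : -1 < c)
    (habc : -2 < a + b + c) :
    IntegrableOn (fun s => s ^ a * ∫ u in s..1, u ^ b * (u - s) ^ c) (Set.Ioc 0 1) := by
  have h := (integrable_triangleKernel ha hc habc).integral_prod_left
  simp only [integral_triangleKernel_left] at h
  exact (integrable_indicator_iff measurableSet_Ioc).1 h

lemma integral_rpow_mul_integral_pos {a b c : ℝ} (ha : -1 < a) (hc : -1 < c)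
    (habc : -2 < a + b + c) :
    0 < ∫ s in (0 : ℝ)..1, s ^ a * ∫ u in s..1, u ^ b * (u - s) ^ c := by
  have h := integral_triangleKernel_pos ha hc habc
  rw [integral_prod _ (integrable_triangleKernel ha hc habc)] at h
  simp only [integral_triangleKernel_left] at h
  rwa [MeasureTheory.integral_indicator measurableSet_Ioc, ← integral_of_le zero_le_one] at h

/-- The increment integral `∫ v in t..t+1, v ^ b * (v - s) ^ c` is at least a multiple of `t⁻¹`,
uniformly in `s ∈ [0, 1]`, and it is bounded in `s`. -/
lemma increment_integral_bounds {b c : ℝ} (hbc : -1 ≤ b + c) :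
    ∃ k : ℝ, 0 < k ∧ ∀ t : ℝ, 2 ≤ t → ∃ M : ℝ, ∀ s ∈ Set.Ioc (0 : ℝ) 1,
      k * t⁻¹ ≤ (∫ v in t..(t + 1), v ^ b * (v - s) ^ c) ∧
      ‖∫ v in t..(t + 1), v ^ b * (v - s) ^ c‖ ≤ M := by
  obtain ⟨k, C, hk, hC, H⟩ := exists_rpow_comparable c
  refine ⟨k / 2, by positivity, fun t ht => ⟨C * (t + 1) ^ |b + c|, fun s hs => ⟨?_, ?_⟩⟩⟩
  · have hcont : ContinuousOn (fun v : ℝ => v ^ b * (v - s) ^ c) (Set.uIcc t (t + 1)) := by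
      rw [Set.uIcc_of_le (by linarith)]
      refine ContinuousOn.mul (continuousOn_id.rpow_const fun v hv => Or.inl ?_)
        ((continuousOn_id.sub continuousOn_const).rpow_const fun v hv => Or.inl ?_)
      · exact ne_of_gt (show (0 : ℝ) < v by linarith [hv.1])
      · exact ne_of_gt (show (0 : ℝ) < v - s by linarith [hv.1, hs.2])
    have hconst : ∫ _ in t..(t + 1), k / 2 * t⁻¹ = k / 2 * t⁻¹ := by simp
    rw [← hconst]
    refine integral_mono_on (by linarith) intervalIntegrable_const hcont.intervalIntegrable
      fun v hv => ?_
    have hv0 : 0 < v := by linarith [hv.1]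
    calc k / 2 * t⁻¹ = k * (2 * t)⁻¹ := by rw [mul_inv]; ring
      _ ≤ k * v⁻¹ := by gcongr; linarith [hv.2]
      _ = k * v ^ (-1 : ℝ) := by rw [Real.rpow_neg_one]
      _ ≤ k * v ^ (b + c) := by
          gcongr
          linarith [hv.1]
      _ = v ^ b * (k * v ^ c) := by rw [Real.rpow_add hv0]; ring
      _ ≤ v ^ b * (v - s) ^ c := by
          gcongr
          exact (H v (v - s) hv0 (by linarith [hv.1, hs.2]) (by linarith [hs.1])).1
  · have hlen : C * (t + 1) ^ |b + c| = C * (t + 1) ^ |b + c| * |t + 1 - t| := by simp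
    rw [hlen]
    refine norm_integral_le_of_norm_le_const fun v hv => ?_
    rw [Set.uIoc_of_le (by linarith)] at hv
    have hv0 : 0 < v := by linarith [hv.1]
    have hvs : 0 < v - s := by linarith [hv.1, hs.2]
    rw [Real.norm_of_nonneg (by positivity)]
    calc v ^ b * (v - s) ^ c ≤ v ^ b * (C * v ^ c) := by
          gcongr
          exact (H v (v - s) hv0 (by linarith [hv.1, hs.2]) (by linarith [hs.1])).2
      _ = C * v ^ (b + c) := by rw [Real.rpow_add hv0]; ring
      _ ≤ C * v ^ |b + c| := by
          gcongr
          · linarith [hv.1]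
          · exact le_abs_self _
      _ ≤ C * (t + 1) ^ |b + c| := by
          gcongr
          exact hv.2

lemma covariance_lower_bound {a b c : ℝ} (ha : -1 < a) (hc : -1 < c) (hbc : -1 ≤ b + c) :
    ∃ k : ℝ, 0 < k ∧ ∀ t : ℝ, 2 ≤ t →
      k * t⁻¹ ≤ ∫ s in (0 : ℝ)..1, s ^ a * (∫ u in s..1, u ^ b * (u - s) ^ c) *
        (∫ v in t..(t + 1), v ^ b * (v - s) ^ c) := by
  have habc : -2 < a + b + c := by linarith
  obtain ⟨k, hk, H⟩ := increment_integral_bounds hbc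
  have hI := integral_rpow_mul_integral_pos ha hc habc
  have hint := integrableOn_rpow_mul_integral ha hc habc
  refine ⟨(∫ s in (0 : ℝ)..1, s ^ a * ∫ u in s..1, u ^ b * (u - s) ^ c) * k, by positivity,
    fun t ht => ?_⟩
  obtain ⟨M, hM⟩ := H t ht
  have hmeas : StronglyMeasurable fun s : ℝ => ∫ v in t..(t + 1), v ^ b * (v - s) ^ c := by
    simp only [integral_of_le (show t ≤ t + 1 by linarith)]
    refine StronglyMeasurable.integral_prod_right (f := fun s v : ℝ => v ^ b * (v - s) ^ c) ?_
    refine Measurable.stronglyMeasurable ?_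
    simp only [Function.uncurry_def]
    fun_prop
  rw [mul_assoc, ← intervalIntegral.integral_mul_const, integral_of_le zero_le_one,
    integral_of_le zero_le_one]
  refine setIntegral_mono_on (hint.mul_const _) ?_ measurableSet_Ioc fun s hs => ?_
  · exact Integrable.mul_bdd (c := M) hint hmeas.aestronglyMeasurable
      ((ae_restrict_iff' measurableSet_Ioc).2 (.of_forall fun s hs => (hM s hs).2))
  · refine mul_le_mul_of_nonneg_left (hM s hs).1 ?_
    refine mul_nonneg (Real.rpow_nonneg hs.1.le _) (integral_nonneg hs.2 fun u hu => ?_)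
    exact mul_nonneg (Real.rpow_nonneg (hs.1.le.trans hu.1) _)
      (Real.rpow_nonneg (sub_nonneg.2 hu.1) _)

lemma tendsto_sum_atTop_of_inv_le {F : ℝ → ℝ} {k : ℝ} (hk : 0 < k)
    (hF : ∀ t, 2 ≤ t → k * t⁻¹ ≤ F t) :
    Tendsto (fun N : ℕ => ∑ n ∈ Finset.range N, F (n + 1)) atTop atTop := by
  rw [← tendsto_add_atTop_iff_nat 1]
  simp only [Finset.sum_range_succ']
  refine tendsto_atTop_add_const_right _ _ ?_
  have hle : ∀ n : ℕ, k * ((n + 2 : ℕ) : ℝ)⁻¹ ≤ F (((n + 1 : ℕ) : ℝ) + 1) := fun n => by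
    have h := hF ((n : ℝ) + 2) (by linarith [n.cast_nonneg (α := ℝ)])
    push_cast
    rwa [add_assoc, one_add_one_eq_two]
  refine (not_summable_iff_tendsto_nat_atTop_of_nonneg
    fun n => le_trans (by positivity) (hle n)).1 fun hs => ?_
  have h1 : Summable fun n : ℕ => k * ((n + 2 : ℕ) : ℝ)⁻¹ :=
    hs.of_nonneg_of_le (fun n => by positivity) hle
  rw [summable_mul_left_iff hk.ne', summable_nat_add_iff (f := fun n : ℕ => (n : ℝ)⁻¹) 2] at h1
  exact Real.not_summable_natCast_inv h1

lemma lintegral_Ici_eq_top_of_inv_le {F : ℝ → ℝ} {k : ℝ} (hk : 0 < k)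
    (hF : ∀ t, 2 ≤ t → k * t⁻¹ ≤ F t) :
    (∫⁻ t in Set.Ici (1 : ℝ), ENNReal.ofReal (F t)) = ⊤ := by
  by_contra hne
  have hlt : (∫⁻ t in Set.Ioi (2 : ℝ), ENNReal.ofReal (k * t⁻¹)) < ⊤ := by
    refine lt_of_le_of_lt ?_ (lt_top_iff_ne_top.2 hne)
    refine (setLIntegral_mono' measurableSet_Ioi fun t ht =>
      ENNReal.ofReal_le_ofReal (hF t (Set.mem_Ioi.1 ht).le)).trans ?_
    exact lintegral_mono_set fun t ht => by
      simp only [Set.mem_Ioi, Set.mem_Ici] at ht ⊢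
      linarith
  have hint : IntegrableOn (fun t : ℝ => k * t⁻¹) (Set.Ioi 2) := by
    refine ⟨by fun_prop, (hasFiniteIntegral_iff_ofReal ?_).2 hlt⟩
    refine (ae_restrict_iff' measurableSet_Ioi).2 (.of_forall fun t ht => ?_)
    have : (0 : ℝ) < t := two_pos.trans ht
    simp only [Pi.zero_apply]
    positivity
  refine not_integrableOn_Ioi_inv (a := 2) ?_
  have h := hint.const_mul k⁻¹
  simp only [inv_mul_cancel_left₀ hk.ne'] at h
  exact h

/-- Theorem 3.3 (long-range dependence): if `β + γ ≥ -1` then the series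
`∑_{n≥1} cov(X₁, X_{n+1} - X_n)` diverges to `+∞` and
`∫₁^∞ cov(X₁, X_{t+1} - X_t) dt` is infinite. -/
theorem stmt_3 (α β γ : ℝ) (hα : -(1/2 : ℝ) < α) (hγ : -1 < γ)
    (hαβγ : -(3/2 : ℝ) < α + β + γ) (hβγ : -1 ≤ β + γ)
    (F : ℝ → ℝ)
    (hF : ∀ t : ℝ, F t = ∫ s in (0:ℝ)..1, s ^ (2*α) *
      (∫ u in s..1, u ^ β * (u - s) ^ γ) *
      (∫ v in t..(t+1), v ^ β * (v - s) ^ γ)) :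
    Tendsto (fun N : ℕ => ∑ n ∈ Finset.range N, F (n + 1)) atTop atTop ∧
    (∫⁻ t in Set.Ici (1:ℝ), ENNReal.ofReal (F t)) = ⊤ := by
  obtain ⟨k, hk, H⟩ := covariance_lower_bound (a := 2 * α) (b := β) (c := γ)
    (by linarith) hγ hβγ
  have hle : ∀ t, 2 ≤ t → k * t⁻¹ ≤ F t := fun t ht => (hF t).symm ▸ H t ht
  exact ⟨tendsto_sum_atTop_of_inv_le hk hle, lintegral_Ici_eq_top_of_inv_le hk hle⟩
end

section
/- Let α, β, γ be real numbers with α > -1/2, γ > -1, α + β + γ > -3/2, and γ < −1/2. For t ≥ 0 define V(t) = ∫₀^{t+1} s^{2α} (∫_{max(s,t)}^{t+1} u^β (u−s)^γ du)² ds. Then lim_{t→+∞} V(t) / t^{2α+2β} = B(γ+1, −2γ−1) / ((γ+1)(2γ+3)), where B(a,b) = Γ(a)Γ(b)/Γ(a+b) is the Beta function. -/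
open MeasureTheory Filter intervalIntegral

namespace VolterraIncrement

open Set ENNReal

/-- The kernel `∫ y in 0..1, (z - y)₊ ^ γ` in closed form, for `z ≥ 0`. -/
noncomputable def kernel (γ z : ℝ) : ℝ :=
  (z ^ (γ + 1) - (max (z - 1) 0) ^ (γ + 1)) / (γ + 1)

/-- The truncated power `w₊ ^ γ`, with value `0` for `w ≤ 0`. -/
noncomputable def posPow (γ : ℝ) : ℝ → ℝ≥0∞ :=
  (Ioi 0).indicator fun w => ENNReal.ofReal (w ^ γ)

@[fun_prop]
lemma measurable_posPow (γ : ℝ) : Measurable (posPow γ) :=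
  Measurable.indicator (by fun_prop) measurableSet_Ioi

lemma lintegral_rpow_mul_one_sub_rpow {a b : ℝ} (ha : 0 < a) (hb : 0 < b) :
    ∫⁻ x in Ioo (0 : ℝ) 1, ENNReal.ofReal (x ^ (a - 1) * (1 - x) ^ (b - 1)) =
      ENNReal.ofReal (ProbabilityTheory.beta a b) := by
  have hpos := ProbabilityTheory.beta_pos ha hb
  have h := ProbabilityTheory.lintegral_betaPDF_eq_one ha hb
  rw [ProbabilityTheory.lintegral_betaPDF] at h
  simp_rw [mul_assoc] at h
  simp_rw [ENNReal.ofReal_mul (one_div_pos.2 hpos).le] at h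
  rw [lintegral_const_mul _ (by fun_prop)] at h
  rw [one_div, ENNReal.ofReal_inv_of_pos hpos, mul_comm] at h
  rw [ENNReal.eq_inv_of_mul_eq_one_left h, inv_inv]

lemma lintegral_rpow_mul_add_rpow {γ d : ℝ} (hγ : -1 < γ) (hγ' : γ < -(1/2)) (hd : 0 < d) :
    ∫⁻ w in Ioi (0 : ℝ), ENNReal.ofReal (w ^ γ * (w + d) ^ γ) =
      ENNReal.ofReal (d ^ (2 * γ + 1) * ProbabilityTheory.beta (γ + 1) (-2 * γ - 1)) := by
  have himg : (fun x : ℝ => d * (x / (1 - x))) '' Ioo 0 1 = Ioi 0 := by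
    ext w
    constructor
    · rintro ⟨x, ⟨h0, h1⟩, rfl⟩
      exact mul_pos hd (div_pos h0 (sub_pos.2 h1))
    · intro (hw : 0 < w)
      refine ⟨w / (w + d), ⟨by positivity, by rw [div_lt_one (by positivity)]; linarith⟩, ?_⟩
      have : 1 - w / (w + d) = d / (w + d) := by field_simp; ring
      simp only [this]
      field_simp
  have hderiv : ∀ x ∈ Ioo (0 : ℝ) 1, HasDerivWithinAt (fun x : ℝ => d * (x / (1 - x)))
      (d / (1 - x) ^ 2) (Ioo 0 1) x := by
    intro x hx
    have h1 : 1 - x ≠ 0 := (sub_pos.2 hx.2).ne'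
    have := (((hasDerivAt_id x).div ((hasDerivAt_id x).const_sub 1) h1).const_mul d)
    refine (this.congr_deriv ?_).hasDerivWithinAt
    simp only [id]
    field_simp
    ring
  have hinj : InjOn (fun x : ℝ => d * (x / (1 - x))) (Ioo 0 1) := by
    intro x hx y hy h
    have h1 : 1 - x ≠ 0 := (sub_pos.2 hx.2).ne'
    have h2 : 1 - y ≠ 0 := (sub_pos.2 hy.2).ne'
    have h3 := mul_left_cancel₀ hd.ne' h
    rw [div_eq_div_iff h1 h2] at h3
    linarith
  rw [← himg, lintegral_image_eq_lintegral_abs_deriv_mul measurableSet_Ioo hderiv hinj]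
  have hb := lintegral_rpow_mul_one_sub_rpow (a := γ + 1) (b := -2 * γ - 1)
    (by linarith) (by linarith)
  rw [ENNReal.ofReal_mul (by positivity), ← hb, ← lintegral_const_mul _ (by fun_prop)]
  refine setLIntegral_congr_fun measurableSet_Ioo fun x hx => ?_
  have h0 := hx.1
  have h1 : 0 < 1 - x := sub_pos.2 hx.2
  rw [← ENNReal.ofReal_mul (by positivity), ← ENNReal.ofReal_mul (by positivity)]
  congr 1
  have e : d * (x / (1 - x)) + d = d / (1 - x) := by field_simp; ring
  rw [e, abs_of_pos (by positivity), Real.mul_rpow hd.le (by positivity),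
    Real.div_rpow h0.le h1.le, Real.div_rpow hd.le h1.le,
    show 2 * γ + 1 = γ + γ + 1 by ring, Real.rpow_add hd, Real.rpow_add hd, Real.rpow_one,
    show -2 * γ - 1 - 1 = -γ + -γ - 2 by ring, Real.rpow_sub h1, Real.rpow_add h1,
    Real.rpow_neg h1.le, add_sub_cancel_right, show (2 : ℝ) = (2 : ℕ) by norm_num,
    Real.rpow_natCast]
  field_simp

lemma lintegral_posPow_mul_posPow_of_lt {γ y y' : ℝ} (hγ : -1 < γ) (hγ' : γ < -(1/2))
    (h : y' < y) :
    ∫⁻ z, posPow γ (z - y) * posPow γ (z - y') =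
      ENNReal.ofReal (|y - y'| ^ (2 * γ + 1) * ProbabilityTheory.beta (γ + 1) (-2 * γ - 1)) := by
  have hd := sub_pos.2 h
  rw [abs_of_pos hd, ← lintegral_rpow_mul_add_rpow hγ hγ' hd, ← lintegral_indicator
    measurableSet_Ioi, ← lintegral_sub_right_eq_self (indicator _ _) y]
  refine lintegral_congr fun z => ?_
  unfold posPow
  by_cases hz : 0 < z - y
  · rw [indicator_of_mem (mem_Ioi.2 hz), indicator_of_mem (mem_Ioi.2 (by linarith)),
      indicator_of_mem (mem_Ioi.2 hz), ← ENNReal.ofReal_mul (by positivity)]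
    ring_nf
  · rw [indicator_of_notMem (mem_Ioi.not.2 hz), indicator_of_notMem (mem_Ioi.not.2 hz), zero_mul]

lemma lintegral_posPow_mul_posPow {γ y y' : ℝ} (hγ : -1 < γ) (hγ' : γ < -(1/2))
    (h : y' ≠ y) :
    ∫⁻ z, posPow γ (z - y) * posPow γ (z - y') =
      ENNReal.ofReal (|y - y'| ^ (2 * γ + 1) * ProbabilityTheory.beta (γ + 1) (-2 * γ - 1)) := by
  rcases h.lt_or_gt with h | h
  · exact lintegral_posPow_mul_posPow_of_lt hγ hγ' h
  · simp_rw [abs_sub_comm y y', mul_comm (posPow γ (_ - y))]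
    exact lintegral_posPow_mul_posPow_of_lt hγ hγ' h

lemma lintegral_Ioc_ofReal {f : ℝ → ℝ} {a b : ℝ} (hab : a ≤ b)
    (hf : IntervalIntegrable f volume a b) (h0 : ∀ x ∈ Ioc a b, 0 ≤ f x) :
    ∫⁻ x in Ioc a b, ENNReal.ofReal (f x) = ENNReal.ofReal (∫ x in a..b, f x) := by
  rw [intervalIntegral.integral_of_le hab, ofReal_integral_eq_lintegral_ofReal
    ((intervalIntegrable_iff_integrableOn_Ioc_of_le hab).1 hf)]
  filter_upwards [ae_restrict_mem measurableSet_Ioc] with x hx using h0 x hx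

lemma lintegral_abs_sub_rpow {c y : ℝ} (hc : -1 < c) (hy : y ∈ Ico (0 : ℝ) 1) :
    ∫⁻ y' in Ico (0 : ℝ) 1, ENNReal.ofReal (|y - y'| ^ c) =
      ENNReal.ofReal ((y ^ (c + 1) + (1 - y) ^ (c + 1)) / (c + 1)) := by
  have hy1 := sub_nonneg.2 hy.2.le
  have hc1 : 0 < c + 1 := by linarith
  have hleft : ∫⁻ y' in Ioc 0 y, ENNReal.ofReal (|y - y'| ^ c) =
      ENNReal.ofReal (y ^ (c + 1) / (c + 1)) := by
    rw [setLIntegral_congr_fun measurableSet_Ioc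
      (fun y' hy' => by rw [abs_of_nonneg (sub_nonneg.2 hy'.2)]),
      lintegral_Ioc_ofReal hy.1, intervalIntegral.integral_comp_sub_left (fun x : ℝ => x ^ c),
      integral_rpow (Or.inl hc), sub_self, sub_zero, Real.zero_rpow hc1.ne', sub_zero]
    · simpa using (intervalIntegral.intervalIntegrable_rpow' hc
        (a := 0) (b := y)).symm.comp_sub_left y
    · exact fun x hx => Real.rpow_nonneg (sub_nonneg.2 hx.2) _
  have hright : ∫⁻ y' in Ioc y 1, ENNReal.ofReal (|y - y'| ^ c) =
      ENNReal.ofReal ((1 - y) ^ (c + 1) / (c + 1)) := by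
    rw [setLIntegral_congr_fun measurableSet_Ioc
      (fun y' hy' => by rw [abs_sub_comm, abs_of_nonneg (sub_nonneg.2 hy'.1.le)]),
      lintegral_Ioc_ofReal hy.2.le, intervalIntegral.integral_comp_sub_right (fun x : ℝ => x ^ c),
      integral_rpow (Or.inl hc), sub_self, Real.zero_rpow hc1.ne', sub_zero]
    · simpa using (intervalIntegral.intervalIntegrable_rpow' hc
        (a := 0) (b := 1 - y)).comp_sub_right y
    · exact fun x hx => Real.rpow_nonneg (sub_nonneg.2 hx.1.le) _
  rw [setLIntegral_congr Ico_ae_eq_Ioc, ← Ioc_union_Ioc_eq_Ioc hy.1 hy.2.le,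
    lintegral_union measurableSet_Ioc (Ioc_disjoint_Ioc_of_le le_rfl), hleft, hright,
    ← ENNReal.ofReal_add, add_div]
  · exact div_nonneg (Real.rpow_nonneg hy.1 _) hc1.le
  · exact div_nonneg (Real.rpow_nonneg hy1 _) hc1.le

lemma lintegral_lintegral_abs_sub_rpow {c : ℝ} (hc : -1 < c) :
    ∫⁻ y in Ico (0 : ℝ) 1, ∫⁻ y' in Ico (0 : ℝ) 1, ENNReal.ofReal (|y - y'| ^ c) =
      ENNReal.ofReal (2 / ((c + 1) * (c + 2))) := by
  rw [setLIntegral_congr_fun measurableSet_Ico fun y hy => lintegral_abs_sub_rpow hc hy,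
    ← ofReal_integral_eq_lintegral_ofReal]
  · congr 1
    rw [integral_Ico_eq_integral_Ioc, ← intervalIntegral.integral_of_le zero_le_one,
      intervalIntegral.integral_div, intervalIntegral.integral_add,
      intervalIntegral.integral_comp_sub_left (fun x : ℝ => x ^ (c + 1)),
      sub_self, sub_zero, integral_rpow (by left; linarith)]
    · rw [Real.one_rpow, Real.zero_rpow (by linarith)]
      have : c + 1 ≠ 0 := by linarith
      have : c + 2 ≠ 0 := by linarith
      rw [show c + 1 + 1 = c + 2 by ring]
      field_simp
      norm_num
    · exact (intervalIntegral.intervalIntegrable_rpow' (by linarith))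
    · exact Continuous.intervalIntegrable
        ((continuous_const.sub continuous_id).rpow_const fun _ => Or.inr (by linarith)) _ _
  · refine (Continuous.integrableOn_Icc ?_).mono_set Ico_subset_Icc_self
    refine ((continuous_id.rpow_const fun _ => Or.inr (by linarith)).add
      ((continuous_const.sub continuous_id).rpow_const fun _ => Or.inr (by linarith))).div_const _
  · filter_upwards [ae_restrict_mem measurableSet_Ico] with y hy
    have := sub_pos.2 hy.2
    have := hy.1
    have : 0 < c + 1 := by linarith
    change 0 ≤ _
    positivity

lemma lintegral_posPow_sub {γ z : ℝ} (hγ : -1 < γ) (hz : 0 < z) :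
    ∫⁻ y in Ico (0 : ℝ) 1, posPow γ (z - y) = ENNReal.ofReal (kernel γ z) := by
  have hm : max (z - 1) 0 ≤ z := max_le (by linarith) hz.le
  have hm0 : 0 ≤ max (z - 1) 0 := le_max_right _ _
  rw [kernel, ← integral_rpow (Or.inl hγ), ← lintegral_Ioc_ofReal hm
    (intervalIntegral.intervalIntegrable_rpow' hγ)
    (fun x hx => Real.rpow_nonneg (hm0.trans hx.1.le) _),
    ← lintegral_indicator measurableSet_Ico, ← lintegral_indicator measurableSet_Ioc,
    ← lintegral_sub_left_eq_self ((Ioc _ _).indicator _) z]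
  refine lintegral_congr fun y => ?_
  by_cases hy : y ∈ Ico (0 : ℝ) 1
  · rw [indicator_of_mem hy, posPow]
    by_cases hzy : z - y ∈ Ioi (0 : ℝ)
    · rw [indicator_of_mem hzy, indicator_of_mem]
      exact ⟨max_lt (by linarith [hy.2]) hzy, by linarith [hy.1]⟩
    · rw [indicator_of_notMem hzy, indicator_of_notMem]
      exact fun h => hzy (hm0.trans_lt h.1)
  · rw [indicator_of_notMem hy, indicator_of_notMem]
    exact fun h => hy ⟨by linarith [h.2], by linarith [(le_max_left _ _).trans_lt h.1]⟩

lemma lintegral_kernel_sq {γ : ℝ} (hγ : -1 < γ) (hγ' : γ < -(1/2)) :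
    ∫⁻ z in Ioi (0 : ℝ), ENNReal.ofReal (kernel γ z) ^ 2 =
      ENNReal.ofReal (ProbabilityTheory.beta (γ + 1) (-2 * γ - 1) /
        ((γ + 1) * (2 * γ + 3))) := by
  have hmeas := measurable_posPow γ
  have hB := ProbabilityTheory.beta_pos (α := γ + 1) (β := -2 * γ - 1)
    (by linarith) (by linarith)
  calc ∫⁻ z in Ioi (0 : ℝ), ENNReal.ofReal (kernel γ z) ^ 2
      = ∫⁻ z, (∫⁻ y in Ico (0 : ℝ) 1, posPow γ (z - y)) ^ 2 := by
        rw [← lintegral_indicator measurableSet_Ioi]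
        refine lintegral_congr fun z => ?_
        by_cases hz : z ∈ Ioi (0 : ℝ)
        · rw [indicator_of_mem hz, lintegral_posPow_sub hγ hz]
        · rw [indicator_of_notMem hz, setLIntegral_eq_zero measurableSet_Ico, zero_pow two_ne_zero]
          intro y hy
          refine indicator_of_notMem (fun h : 0 < z - y => hz ?_) _
          exact mem_Ioi.2 (by linarith [hy.1])
    _ = ∫⁻ z, ∫⁻ y in Ico (0 : ℝ) 1, ∫⁻ y' in Ico (0 : ℝ) 1,
          posPow γ (z - y) * posPow γ (z - y') := by
        refine lintegral_congr fun z => ?_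
        have : Measurable fun y => posPow γ (z - y) := by fun_prop
        simp_rw [lintegral_const_mul _ this]
        rw [lintegral_mul_const _ this, sq]
    _ = ∫⁻ y in Ico (0 : ℝ) 1, ∫⁻ y' in Ico (0 : ℝ) 1,
          ∫⁻ z, posPow γ (z - y) * posPow γ (z - y') := by
        rw [lintegral_lintegral_swap]
        · refine lintegral_congr fun y => ?_
          rw [lintegral_lintegral_swap]
          fun_prop
        · refine (Measurable.lintegral_prod_right' (f := fun p : (ℝ × ℝ) × ℝ =>
            posPow γ (p.1.1 - p.1.2) * posPow γ (p.1.1 - p.2)) ?_).aemeasurable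
          fun_prop
    _ = ∫⁻ y in Ico (0 : ℝ) 1, ∫⁻ y' in Ico (0 : ℝ) 1,
          ENNReal.ofReal (|y - y'| ^ (2 * γ + 1)) *
            ENNReal.ofReal (ProbabilityTheory.beta (γ + 1) (-2 * γ - 1)) := by
        refine lintegral_congr fun y => lintegral_congr_ae ?_
        filter_upwards [ae_restrict_of_ae (volume.ae_ne y)] with y' hy'
        rw [lintegral_posPow_mul_posPow hγ hγ' hy', ENNReal.ofReal_mul (by positivity)]
    _ = _ := by
        have hm : Measurable fun p : ℝ × ℝ => ENNReal.ofReal (|p.1 - p.2| ^ (2 * γ + 1)) := by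
          fun_prop
        rw [lintegral_congr fun y => lintegral_mul_const _ (by fun_prop)]
        rw [lintegral_mul_const _ hm.lintegral_prod_right',
          lintegral_lintegral_abs_sub_rpow (by linarith), ← ENNReal.ofReal_mul' hB.le]
        congr 1
        have : γ + 1 ≠ 0 := by linarith
        have : 2 * γ + 3 ≠ 0 := by linarith
        rw [show 2 * γ + 1 + 1 = 2 * (γ + 1) by ring, show 2 * γ + 1 + 2 = 2 * γ + 3 by ring]
        field_simp

lemma continuous_kernel {γ : ℝ} (hγ : -1 < γ) : Continuous (kernel γ) := by
  have h : 0 ≤ γ + 1 := by linarith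
  exact ((continuous_id.rpow_const fun _ => Or.inr h).sub
    (((continuous_id.sub continuous_const).max continuous_const).rpow_const
      fun _ => Or.inr h)).div_const _

lemma kernel_nonneg {γ z : ℝ} (hγ : -1 < γ) (hz : 0 ≤ z) : 0 ≤ kernel γ z :=
  div_nonneg (sub_nonneg.2 (Real.rpow_le_rpow (le_max_right _ _)
    (max_le (by linarith) hz) (by linarith))) (by linarith)

lemma kernel_le_rpow {γ z : ℝ} (hγ : -1 < γ) (hγ' : γ ≤ 0) (hz : 1 < z) :
    kernel γ z ≤ (z - 1) ^ γ := by
  have hz' := sub_pos.2 hz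
  rw [kernel, max_eq_left hz'.le, ← integral_rpow (Or.inl hγ)]
  calc ∫ x in (z - 1)..z, x ^ γ ≤ ∫ _ in (z - 1)..z, (z - 1) ^ γ :=
        intervalIntegral.integral_mono_on (by linarith)
          (intervalIntegral.intervalIntegrable_rpow' hγ) intervalIntegrable_const
          fun x hx => Real.rpow_le_rpow_of_nonpos hz' hx.1 hγ'
    _ = (z - 1) ^ γ := by simp

lemma integrableOn_kernel_sq {γ : ℝ} (hγ : -1 < γ) (hγ' : γ < -(1/2)) :
    IntegrableOn (fun z => kernel γ z ^ 2) (Ioi 0) := by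
  refine ⟨((continuous_kernel hγ).pow 2).aestronglyMeasurable, ?_⟩
  rw [hasFiniteIntegral_iff_ofReal (ae_of_all _ fun z => sq_nonneg _),
    setLIntegral_congr_fun measurableSet_Ioi
      (fun z hz => ENNReal.ofReal_pow (kernel_nonneg hγ (le_of_lt hz)) 2),
    lintegral_kernel_sq hγ hγ']
  exact ENNReal.ofReal_lt_top

lemma integral_kernel_sq {γ : ℝ} (hγ : -1 < γ) (hγ' : γ < -(1/2)) :
    ∫ z in Ioi (0 : ℝ), kernel γ z ^ 2 =
      ProbabilityTheory.beta (γ + 1) (-2 * γ - 1) / ((γ + 1) * (2 * γ + 3)) := by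
  rw [integral_eq_lintegral_of_nonneg_ae (ae_of_all _ fun z => sq_nonneg _)
    ((continuous_kernel hγ).pow 2).aestronglyMeasurable,
    setLIntegral_congr_fun measurableSet_Ioi
      (fun z hz => ENNReal.ofReal_pow (kernel_nonneg hγ (le_of_lt hz)) 2),
    lintegral_kernel_sq hγ hγ', ENNReal.toReal_ofReal]
  exact div_nonneg (ProbabilityTheory.beta_pos (by linarith) (by linarith)).le
    (mul_nonneg (by linarith) (by linarith))

lemma intervalIntegrable_rpow_mul_kernel_sq {α γ : ℝ} (hα : -(1/2) < α) (hγ : -1 < γ)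
    (T a b : ℝ) :
    IntervalIntegrable (fun s : ℝ => s ^ (2 * α) * kernel γ (T - s) ^ 2) volume a b :=
  (intervalIntegral.intervalIntegrable_rpow' (by linarith)).mul_continuousOn
    (((continuous_kernel hγ).comp (continuous_const.sub continuous_id)).pow 2).continuousOn

lemma tendsto_integral_near {α γ : ℝ} (hα : -(1/2) < α) (hγ : -1 < γ) (hγ' : γ < -(1/2)) :
    Tendsto (fun T : ℝ =>
        (∫ s in (T / 2)..T, s ^ (2 * α) * kernel γ (T - s) ^ 2) / T ^ (2 * α)) atTop
      (nhds (∫ z in Ioi (0 : ℝ), kernel γ z ^ 2)) := by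
  have key : Tendsto (fun T : ℝ => ∫ z in Ioi (0 : ℝ), (Ioc 0 (T / 2)).indicator
      (fun z => (1 - z / T) ^ (2 * α) * kernel γ z ^ 2) z) atTop
      (nhds (∫ z in Ioi (0 : ℝ), kernel γ z ^ 2)) := by
    refine tendsto_integral_filter_of_dominated_convergence (fun z => 2 * kernel γ z ^ 2)
      (Eventually.of_forall fun T => ?_) ?_ ((integrableOn_kernel_sq hγ hγ').const_mul 2) ?_
    · refine (Measurable.indicator ?_ measurableSet_Ioc).aestronglyMeasurable
      have := (continuous_kernel hγ).measurable
      fun_prop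
    · filter_upwards [eventually_gt_atTop 0] with T hT
      refine ae_of_all _ fun z => ?_
      by_cases hz : z ∈ Ioc 0 (T / 2)
      · have h1 : z / T ≤ 1 / 2 := by
          rw [div_le_iff₀ hT]; linarith [hz.2]
        have h2 : 0 < z / T := div_pos hz.1 hT
        have h3 : (1 - z / T) ^ (2 * α) ≤ 2 := by
          calc (1 - z / T) ^ (2 * α) ≤ (1 - z / T) ^ (-1 : ℝ) :=
                Real.rpow_le_rpow_of_exponent_ge (by linarith) (by linarith) (by linarith)
            _ ≤ (1 / 2) ^ (-1 : ℝ) :=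
                Real.rpow_le_rpow_of_nonpos (by norm_num) (by linarith) (by norm_num)
            _ = 2 := by rw [Real.rpow_neg_one]; norm_num
        have h4 : 0 ≤ (1 - z / T) ^ (2 * α) := Real.rpow_nonneg (by linarith) _
        rw [indicator_of_mem hz, Real.norm_of_nonneg (by positivity)]
        gcongr
      · rw [indicator_of_notMem hz, norm_zero]
        positivity
    · filter_upwards [ae_restrict_mem measurableSet_Ioi] with z hz
      have h : Tendsto (fun T : ℝ => (1 - z / T) ^ (2 * α) * kernel γ z ^ 2) atTop
          (nhds ((1 - 0) ^ (2 * α) * kernel γ z ^ 2)) :=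
        (((tendsto_const_nhds.div_atTop tendsto_id).const_sub 1).rpow_const
          (Or.inl (by norm_num))).mul_const _
      rw [sub_zero, Real.one_rpow, one_mul] at h
      refine h.congr' ?_
      filter_upwards [eventually_ge_atTop (2 * z)] with T hT
      rw [indicator_of_mem]
      exact ⟨hz, by linarith⟩
  refine key.congr' ?_
  filter_upwards [eventually_gt_atTop 0] with T hT
  rw [setIntegral_indicator measurableSet_Ioc, inter_eq_self_of_subset_right fun z hz => hz.1,
    ← intervalIntegral.integral_of_le (by positivity), ← intervalIntegral.integral_div]
  have := intervalIntegral.integral_comp_sub_left (a := 0) (b := T / 2)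
    (fun s => s ^ (2 * α) * kernel γ (T - s) ^ 2 / T ^ (2 * α)) T
  rw [sub_zero, show T - T / 2 = T / 2 by ring] at this
  rw [← this]
  refine intervalIntegral.integral_congr fun z hz => ?_
  rw [uIcc_of_le (by positivity)] at hz
  have h1 : 0 ≤ T - z := by linarith [hz.2]
  have h2 : 1 - z / T = (T - z) / T := by field_simp
  rw [h2, Real.div_rpow h1 hT.le, _root_.sub_sub_cancel]
  ring

lemma tendsto_integral_far {α γ : ℝ} (hα : -(1/2) < α) (hγ : -1 < γ) (hγ' : γ < -(1/2)) :
    Tendsto (fun T : ℝ =>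
        (∫ s in 0..(T / 2), s ^ (2 * α) * kernel γ (T - s) ^ 2) / T ^ (2 * α)) atTop
      (nhds 0) := by
  have hlim : Tendsto (fun T : ℝ => ((1 / 4) ^ γ) ^ 2 * (1 / 2) ^ (2 * α + 1) / (2 * α + 1) *
      T ^ (-(-(2 * γ + 1)))) atTop (nhds 0) := by
    simpa using (tendsto_rpow_neg_atTop (y := -(2 * γ + 1)) (by linarith)).const_mul
      (((1 / 4 : ℝ) ^ γ) ^ 2 * (1 / 2) ^ (2 * α + 1) / (2 * α + 1))
  refine squeeze_zero' ?_ ?_ hlim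
  · filter_upwards [eventually_gt_atTop 0] with T hT
    refine div_nonneg (intervalIntegral.integral_nonneg (by positivity) fun s hs => ?_)
      (by positivity)
    exact mul_nonneg (Real.rpow_nonneg hs.1 _) (sq_nonneg _)
  · filter_upwards [eventually_ge_atTop 4] with T hT4
    have hT : 0 < T := by linarith
    rw [div_le_iff₀ (by positivity)]
    calc ∫ s in 0..(T / 2), s ^ (2 * α) * kernel γ (T - s) ^ 2
        ≤ ∫ s in 0..(T / 2), s ^ (2 * α) * ((T / 4) ^ γ) ^ 2 := by
          refine intervalIntegral.integral_mono_on (by positivity)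
            (intervalIntegrable_rpow_mul_kernel_sq hα hγ T _ _)
            ((intervalIntegral.intervalIntegrable_rpow' (by linarith)).mul_const _)
            fun s hs => ?_
          have h1 : T / 4 ≤ T - s - 1 := by linarith [hs.2]
          have h2 := kernel_nonneg hγ (z := T - s) (by linarith)
          refine mul_le_mul_of_nonneg_left (pow_le_pow_left₀ h2 ?_ 2) (Real.rpow_nonneg hs.1 _)
          exact (kernel_le_rpow hγ (by linarith) (by linarith)).trans
            (Real.rpow_le_rpow_of_nonpos (by positivity) h1 (by linarith))
      _ = _ := by
          have h1 : 2 * α + 1 ≠ 0 := by linarith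
          rw [intervalIntegral.integral_mul_const, integral_rpow (Or.inl (by linarith)),
            Real.zero_rpow h1, sub_zero, neg_neg, show T / 4 = 1 / 4 * T by ring,
            show T / 2 = 1 / 2 * T by ring, Real.mul_rpow (by norm_num) hT.le,
            Real.mul_rpow (by norm_num) hT.le, show 2 * γ + 1 = γ + γ + 1 by ring,
            Real.rpow_add hT (γ + γ), Real.rpow_add hT γ, Real.rpow_add hT (2 * α), Real.rpow_one]
          ring

lemma tendsto_integral_kernel {α γ : ℝ} (hα : -(1/2) < α) (hγ : -1 < γ) (hγ' : γ < -(1/2)) :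
    Tendsto (fun T : ℝ =>
        (∫ s in 0..T, s ^ (2 * α) * kernel γ (T - s) ^ 2) / T ^ (2 * α)) atTop
      (nhds (∫ z in Ioi (0 : ℝ), kernel γ z ^ 2)) := by
  have h := (tendsto_integral_far hα hγ hγ').add (tendsto_integral_near hα hγ hγ')
  rw [zero_add] at h
  refine h.congr fun T => ?_
  rw [← add_div, intervalIntegral.integral_add_adjacent_intervals] <;>
    exact intervalIntegrable_rpow_mul_kernel_sq hα hγ T _ _

lemma integral_sub_rpow_eq_kernel {γ : ℝ} (hγ : -1 < γ) (s t : ℝ) :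
    ∫ u in (max s t)..(t + 1), (u - s) ^ γ = kernel γ (t + 1 - s) := by
  rw [intervalIntegral.integral_comp_sub_right (fun x : ℝ => x ^ γ), integral_rpow (Or.inl hγ),
    kernel, show t + 1 - s - 1 = t - s by ring, max_comm (t - s) 0, ← sub_self s,
    ← max_sub_sub_right]

lemma rpow_mem_uIcc {a b u : ℝ} (β : ℝ) (ha : 0 < a) (hu : u ∈ Icc a b) :
    u ^ β ∈ uIcc (a ^ β) (b ^ β) := by
  have hu0 := ha.trans_le hu.1
  rcases le_total 0 β with hβ | hβ
  · exact mem_uIcc.2 (Or.inl ⟨Real.rpow_le_rpow ha.le hu.1 hβ, Real.rpow_le_rpow hu0.le hu.2 hβ⟩)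
  · exact mem_uIcc.2 (Or.inr ⟨Real.rpow_le_rpow_of_nonpos hu0 hu.2 hβ,
      Real.rpow_le_rpow_of_nonpos ha hu.1 hβ⟩)

lemma integral_rpow_mul_sub_rpow_mem {β γ s t : ℝ} (hγ : -1 < γ) (ht : 0 < t)
    (hs : s ≤ t + 1) :
    ∫ u in (max s t)..(t + 1), u ^ β * (u - s) ^ γ ∈
      Icc (min (t ^ β) ((t + 1) ^ β) * kernel γ (t + 1 - s))
        (max (t ^ β) ((t + 1) ^ β) * kernel γ (t + 1 - s)) := by
  have hle : max s t ≤ t + 1 := max_le hs (by linarith)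
  have ht' : t ≤ max s t := le_max_right _ _
  have hi : IntervalIntegrable (fun u : ℝ => (u - s) ^ γ) volume (max s t) (t + 1) := by
    simpa using (intervalIntegral.intervalIntegrable_rpow' hγ (a := max s t - s)
      (b := t + 1 - s)).comp_sub_right s
  have hi' : IntervalIntegrable (fun u : ℝ => u ^ β * (u - s) ^ γ) volume (max s t) (t + 1) := by
    refine hi.continuousOn_mul fun u hu => ?_
    rw [uIcc_of_le hle] at hu
    exact (Real.continuousAt_rpow_const _ _
      (Or.inl (ht.trans_le (ht'.trans hu.1)).ne')).continuousWithinAt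
  have hmem : ∀ u ∈ Icc (max s t) (t + 1), u ^ β ∈ uIcc (t ^ β) ((t + 1) ^ β) :=
    fun u hu => rpow_mem_uIcc β ht ⟨ht'.trans hu.1, hu.2⟩
  have h0 : ∀ u ∈ Icc (max s t) (t + 1), 0 ≤ (u - s) ^ γ :=
    fun u hu => Real.rpow_nonneg (sub_nonneg.2 ((le_max_left _ _).trans hu.1)) _
  rw [← integral_sub_rpow_eq_kernel hγ s t, ← intervalIntegral.integral_const_mul,
    ← intervalIntegral.integral_const_mul]
  exact ⟨intervalIntegral.integral_mono_on hle (hi.const_mul _) hi'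
      fun u hu => mul_le_mul_of_nonneg_right (hmem u hu).1 (h0 u hu),
    intervalIntegral.integral_mono_on hle hi' (hi.const_mul _)
      fun u hu => mul_le_mul_of_nonneg_right (hmem u hu).2 (h0 u hu)⟩

lemma stronglyMeasurable_integral_Ioc_max (β γ t : ℝ) :
    StronglyMeasurable fun s : ℝ => ∫ u in Ioc (max s t) (t + 1), u ^ β * (u - s) ^ γ := by
  have hset : MeasurableSet {p : ℝ × ℝ | max p.1 t < p.2 ∧ p.2 ≤ t + 1} :=
    (measurableSet_lt (measurable_fst.max measurable_const) measurable_snd).inter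
      (measurableSet_le measurable_snd measurable_const)
  have hm : Measurable ({p : ℝ × ℝ | max p.1 t < p.2 ∧ p.2 ≤ t + 1}.indicator
      fun p => p.2 ^ β * (p.2 - p.1) ^ γ) := Measurable.indicator (by fun_prop) hset
  convert! hm.stronglyMeasurable.integral_prod_right' (ν := volume) using 2 with s
  rw [← MeasureTheory.integral_indicator measurableSet_Ioc]
  rfl

lemma integral_mem_Icc {α β γ t : ℝ} (hα : -(1/2) < α) (hγ : -1 < γ) (ht : 0 < t) :
    ∫ s in 0..(t + 1), s ^ (2 * α) *
        (∫ u in (max s t)..(t + 1), u ^ β * (u - s) ^ γ) ^ 2 ∈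
      Icc (min (t ^ β) ((t + 1) ^ β) ^ 2 *
          ∫ s in 0..(t + 1), s ^ (2 * α) * kernel γ (t + 1 - s) ^ 2)
        (max (t ^ β) ((t + 1) ^ β) ^ 2 *
          ∫ s in 0..(t + 1), s ^ (2 * α) * kernel γ (t + 1 - s) ^ 2) := by
  have hT : 0 ≤ t + 1 := by linarith
  have hmin : 0 ≤ min (t ^ β) ((t + 1) ^ β) := by positivity
  have hK := intervalIntegrable_rpow_mul_kernel_sq hα hγ (t + 1) 0 (t + 1)
  have hlow : ∀ s ∈ Icc 0 (t + 1),
      min (t ^ β) ((t + 1) ^ β) ^ 2 * (s ^ (2 * α) * kernel γ (t + 1 - s) ^ 2) ≤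
        s ^ (2 * α) * (∫ u in (max s t)..(t + 1), u ^ β * (u - s) ^ γ) ^ 2 := fun s hs => by
    have h := integral_rpow_mul_sub_rpow_mem (β := β) hγ ht hs.2
    rw [mul_left_comm, ← mul_pow]
    exact mul_le_mul_of_nonneg_left (pow_le_pow_left₀
      (mul_nonneg hmin (kernel_nonneg hγ (sub_nonneg.2 hs.2))) h.1 2) (Real.rpow_nonneg hs.1 _)
  have hup : ∀ s ∈ Icc 0 (t + 1),
      s ^ (2 * α) * (∫ u in (max s t)..(t + 1), u ^ β * (u - s) ^ γ) ^ 2 ≤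
        max (t ^ β) ((t + 1) ^ β) ^ 2 * (s ^ (2 * α) * kernel γ (t + 1 - s) ^ 2) := fun s hs => by
    have h := integral_rpow_mul_sub_rpow_mem (β := β) hγ ht hs.2
    rw [mul_left_comm, ← mul_pow]
    exact mul_le_mul_of_nonneg_left (pow_le_pow_left₀
      ((mul_nonneg hmin (kernel_nonneg hγ (sub_nonneg.2 hs.2))).trans h.1) h.2 2)
      (Real.rpow_nonneg hs.1 _)
  have hi : IntervalIntegrable (fun s : ℝ => s ^ (2 * α) *
      (∫ u in (max s t)..(t + 1), u ^ β * (u - s) ^ γ) ^ 2) volume 0 (t + 1) := by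
    refine (hK.const_mul (max (t ^ β) ((t + 1) ^ β) ^ 2)).mono_fun' ?_ ?_
    · rw [uIoc_of_le hT]
      have hm := (stronglyMeasurable_integral_Ioc_max β γ t).measurable
      refine AEStronglyMeasurable.congr (f := fun s : ℝ => s ^ (2 * α) *
        (∫ u in Ioc (max s t) (t + 1), u ^ β * (u - s) ^ γ) ^ 2) ?_ ?_
      · exact (Measurable.mul (by fun_prop) (hm.pow_const 2)).aestronglyMeasurable
      · filter_upwards [ae_restrict_mem measurableSet_Ioc] with s hs
        rw [intervalIntegral.integral_of_le (max_le hs.2 (by linarith))]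
    · rw [uIoc_of_le hT]
      filter_upwards [ae_restrict_mem measurableSet_Ioc] with s hs
      rw [Real.norm_of_nonneg (mul_nonneg (Real.rpow_nonneg hs.1.le _) (sq_nonneg _))]
      exact hup s (Ioc_subset_Icc_self hs)
  rw [← intervalIntegral.integral_const_mul, ← intervalIntegral.integral_const_mul]
  exact ⟨intervalIntegral.integral_mono_on hT (hK.const_mul _) hi hlow,
    intervalIntegral.integral_mono_on hT hi (hK.const_mul _) hup⟩

lemma tendsto_add_one_div_rpow (c : ℝ) :
    Tendsto (fun t : ℝ => (t + 1) ^ c / t ^ c) atTop (nhds 1) := by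
  have h : Tendsto (fun t : ℝ => (1 + 1 / t) ^ c) atTop (nhds ((1 + 0) ^ c)) :=
    ((tendsto_const_nhds.div_atTop tendsto_id).const_add 1).rpow_const (Or.inl (by norm_num))
  rw [add_zero, Real.one_rpow] at h
  refine h.congr' ?_
  filter_upwards [eventually_gt_atTop 0] with t ht
  rw [← Real.div_rpow (by linarith) ht.le]
  congr 1
  field_simp

end VolterraIncrement

/-- Lemma 3.4, case `γ < -1/2`: asymptotics of the incremental variance
`E(X_{t+1} - X_t)²` of the Gaussian Volterra process. -/
theorem stmt_4 (α β γ : ℝ) (hα : -(1/2 : ℝ) < α) (hγ : -1 < γ)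
    (hαβγ : -(3/2 : ℝ) < α + β + γ) (hγ' : γ < -(1/2 : ℝ))
    (V : ℝ → ℝ)
    (hV : ∀ t : ℝ, V t = ∫ s in (0:ℝ)..(t+1), s ^ (2*α) *
      (∫ u in (max s t)..(t+1), u ^ β * (u - s) ^ γ) ^ 2) :
    Tendsto (fun t : ℝ => V t / t ^ (2*α+2*β)) atTop
      (nhds (Real.Gamma (γ+1) * Real.Gamma (-2*γ-1) / Real.Gamma (-γ)
        / ((γ+1) * (2*γ+3)))) := by
  have hP := (VolterraIncrement.tendsto_integral_kernel hα hγ hγ').comp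
    (tendsto_atTop_add_const_right atTop (1 : ℝ) tendsto_id)
  rw [VolterraIncrement.integral_kernel_sq hγ hγ', ProbabilityTheory.beta,
    show γ + 1 + (-2 * γ - 1) = -γ by ring] at hP
  have hP' := hP.mul (VolterraIncrement.tendsto_add_one_div_rpow (2 * α))
  rw [mul_one] at hP'
  have hβ := VolterraIncrement.tendsto_add_one_div_rpow β
  have hmin := (((tendsto_const_nhds (x := (1 : ℝ))).min hβ).pow 2).mul hP'
  have hmax := (((tendsto_const_nhds (x := (1 : ℝ))).max hβ).pow 2).mul hP'
  rw [min_self, one_pow, one_mul] at hmin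
  rw [max_self, one_pow, one_mul] at hmax
  have hscale : ∀ t : ℝ, 0 < t → ∀ m P : ℝ,
      (m / t ^ β) ^ 2 * (P / (t + 1) ^ (2 * α) * ((t + 1) ^ (2 * α) / t ^ (2 * α))) =
        m ^ 2 * P / t ^ (2 * α + 2 * β) := by
    intro t ht m P
    have h1 : 0 < (t + 1) ^ (2 * α) := by positivity
    rw [Real.rpow_add ht, two_mul β, Real.rpow_add ht]
    field_simp
  refine tendsto_of_tendsto_of_tendsto_of_le_of_le' hmin hmax ?_ ?_
  · filter_upwards [eventually_gt_atTop 0] with t ht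
    have htβ : 0 < t ^ β := by positivity
    have hmin' : min 1 ((t + 1) ^ β / t ^ β) = min (t ^ β) ((t + 1) ^ β) / t ^ β := by
      rw [← min_div_div_right htβ.le, div_self htβ.ne']
    simp only [Function.comp, id]
    rw [hmin', hscale t ht, hV]
    gcongr
    exact (VolterraIncrement.integral_mem_Icc hα hγ ht).1
  · filter_upwards [eventually_gt_atTop 0] with t ht
    have htβ : 0 < t ^ β := by positivity
    have hmax' : max 1 ((t + 1) ^ β / t ^ β) = max (t ^ β) ((t + 1) ^ β) / t ^ β := by
      rw [← max_div_div_right htβ.le, div_self htβ.ne']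
    simp only [Function.comp, id]
    rw [hmax', hscale t ht, hV]
    gcongr
    exact (VolterraIncrement.integral_mem_Icc hα hγ ht).2
end

section
/- Let α, β, γ be real numbers with α > -1/2, α + β + γ > -3/2, and γ = −1/2. For t ≥ 0 define V(t) = ∫₀^{t+1} s^{2α} (∫_{max(s,t)}^{t+1} u^β (u−s)^{−1/2} du)² ds. Then lim_{t→+∞} V(t) / (t^{2α+2β} log t) = 1. -/
open MeasureTheory Filter intervalIntegral

/-- A Lipschitz-type bound for `y ↦ y ^ a` at `1`, uniform on `(0, 1]`. -/
lemma abs_one_sub_rpow_le (a : ℝ) {y : ℝ} (hy : 0 < y) (hy1 : y ≤ 1) :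
    |1 - y ^ a| ≤ (2 + 2 * |a|) * (1 + y ^ a) * (1 - y) := by
  have hp : 0 < y ^ a := Real.rpow_pos_of_pos hy a
  rcases le_total y (1/2) with h | h
  · have h1 : |1 - y ^ a| ≤ 1 + y ^ a := by
      rw [abs_le]; constructor <;> linarith
    have h2 : 1 ≤ (2 + 2 * |a|) * (1 - y) := by nlinarith [abs_nonneg a]
    nlinarith
  · have hlog : Real.log y ≤ 0 := Real.log_nonpos hy.le hy1
    have hlog2 : -Real.log y ≤ 2 * (1 - y) := by
      have h1 := Real.one_sub_inv_le_log_of_pos hy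
      have h2 : y⁻¹ - 1 ≤ 2 * (1 - y) := by
        have : y⁻¹ - 1 = (1 - y) / y := by field_simp
        rw [this, div_le_iff₀ hy]
        nlinarith
      linarith
    have hx : |Real.log y * a| ≤ |a| * (2 * (1 - y)) := by
      rw [abs_mul, abs_of_nonpos hlog, mul_comm]
      exact mul_le_mul_of_nonneg_left hlog2 (abs_nonneg a)
    have key : |1 - y ^ a| ≤ |Real.log y * a| * (1 + y ^ a) := by
      rw [Real.rpow_def_of_pos hy]
      set x := Real.log y * a
      have h1 := Real.add_one_le_exp x
      have h2 := Real.add_one_le_exp (-x)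
      have hmul : Real.exp (-x) * Real.exp x = 1 := by rw [← Real.exp_add]; simp
      have hex := Real.exp_pos x
      have h3 : Real.exp x - 1 ≤ x * Real.exp x := by nlinarith
      have h4 := le_abs_self x
      have h5 := neg_abs_le x
      have h6 := abs_nonneg x
      rw [abs_le]; constructor <;> nlinarith
    have h1y : 0 ≤ 1 - y := by linarith
    calc |1 - y ^ a| ≤ |Real.log y * a| * (1 + y ^ a) := key
      _ ≤ |a| * (2 * (1 - y)) * (1 + y ^ a) := by gcongr
      _ ≤ (2 + 2 * |a|) * (1 + y ^ a) * (1 - y) := by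
        nlinarith [mul_nonneg (by linarith : 0 ≤ 1 + y ^ a) h1y]

lemma abs_rpow_sub_rpow_le (a : ℝ) {s t : ℝ} (hs : 0 < s) (hst : s ≤ t) :
    |s ^ a - t ^ a| ≤ (2 + 2 * |a|) * ((t ^ a + s ^ a) / t) * (t - s) := by
  have ht : 0 < t := hs.trans_le hst
  have hta : 0 < t ^ a := Real.rpow_pos_of_pos ht a
  have h := abs_one_sub_rpow_le a (div_pos hs ht) ((div_le_one ht).2 hst)
  rw [Real.div_rpow hs.le ht.le] at h
  have e1 : |s ^ a - t ^ a| = |1 - s ^ a / t ^ a| * t ^ a := by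
    rw [← abs_of_pos hta, ← abs_mul, abs_of_pos hta, abs_sub_comm]
    congr 1
    field_simp
  rw [e1]
  calc |1 - s ^ a / t ^ a| * t ^ a
      ≤ (2 + 2 * |a|) * (1 + s ^ a / t ^ a) * (1 - s / t) * t ^ a := by gcongr
    _ = _ := by field_simp

/-- The closed form of `∫ u in (max s t)..(t+1), (u - s) ^ (-1/2)`. -/
noncomputable def incrementKernel (t s : ℝ) : ℝ :=
  2 * (√(t + 1 - s) - √(max s t - s))

lemma continuous_incrementKernel (t : ℝ) : Continuous (incrementKernel t) := by
  unfold incrementKernel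
  fun_prop

lemma incrementKernel_nonneg {t s : ℝ} (hs : s ≤ t + 1) : 0 ≤ incrementKernel t s := by
  have : √(max s t - s) ≤ √(t + 1 - s) := by
    apply Real.sqrt_le_sqrt
    have : max s t ≤ t + 1 := max_le hs (by linarith)
    linarith
  unfold incrementKernel
  linarith

lemma incrementKernel_sq_bounds {t s : ℝ} (hs : s ≤ t) :
    (t - s) * incrementKernel t s ^ 2 ≤ 1 ∧ 1 / (t + 1 - s) ≤ incrementKernel t s ^ 2 ∧
      incrementKernel t s ^ 2 - 1 / (t + 1 - s) ≤ 4 / (t + 1 - s) ^ 2 := by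
  unfold incrementKernel
  rw [max_eq_right hs]
  have hx : 0 < t + 1 - s := by linarith
  have ha2 : √(t + 1 - s) ^ 2 = t + 1 - s := Real.sq_sqrt hx.le
  have hb2 : √(t - s) ^ 2 = t - s := Real.sq_sqrt (by linarith)
  have ha0 : 0 < √(t + 1 - s) := Real.sqrt_pos.2 hx
  have hb0 := Real.sqrt_nonneg (t - s)
  have hab : √(t - s) ≤ √(t + 1 - s) := Real.sqrt_le_sqrt (by linarith)
  set A := √(t + 1 - s)
  set B := √(t - s)
  rw [← ha2, ← hb2]
  have h1 : (A - B) * (A + B) = 1 := by nlinarith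
  have hd : 0 ≤ A - B := by linarith
  have hAB : A * (A - B) ≤ 1 := by nlinarith
  refine ⟨?_, ?_, ?_⟩
  · have h2 : 0 ≤ B * (2 * (A - B)) := by positivity
    have h3 : B * (2 * (A - B)) ≤ 1 := by nlinarith
    nlinarith
  · rw [div_le_iff₀ (by positivity)]
    have h3 : 1 ≤ A * (2 * (A - B)) := by nlinarith
    nlinarith
  · rw [sub_le_iff_le_add, show 4 / (A ^ 2) ^ 2 + 1 / A ^ 2 = (4 + A ^ 2) / A ^ 4 by field_simp,
      le_div_iff₀ (by positivity)]
    set p := A * (A - B)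
    have hp0 : 0 ≤ p := by positivity
    have hp : 2 * p = 1 + (A - B) ^ 2 := by simp only [p]; nlinarith
    have e : (2 * (A - B)) ^ 2 * A ^ 4 = A ^ 2 * (2 * p) ^ 2 := by simp only [p]; ring
    have e2 : A ^ 2 * (2 * p) ^ 2 = A ^ 2 + 2 * p ^ 2 + p ^ 2 * (A - B) ^ 2 := by
      rw [hp]; simp only [p]; ring
    have hq : (A - B) ^ 2 ≤ 1 := by nlinarith
    have hp2 : p ^ 2 ≤ 1 := by nlinarith
    have : p ^ 2 * (A - B) ^ 2 ≤ 1 := by nlinarith [sq_nonneg (A - B)]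
    rw [e, e2]; linarith

lemma incrementKernel_sq_le {t s : ℝ} (hs : s ≤ t + 1) : incrementKernel t s ^ 2 ≤ 4 := by
  have h0 := incrementKernel_nonneg hs
  have h2 : incrementKernel t s ≤ 2 := by
    unfold incrementKernel
    have h1 : t + 1 - s ≤ (max s t - s) + 1 := by linarith [le_max_right s t]
    have h3 : 0 ≤ max s t - s := by linarith [le_max_left s t]
    have : √(t + 1 - s) ≤ √(max s t - s) + 1 := by
      apply Real.sqrt_le_iff.2
      have := Real.sqrt_nonneg (max s t - s)
      have := Real.sq_sqrt h3
      constructor <;> nlinarith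
    linarith
  nlinarith

lemma integral_sub_rpow_neg_half (t s : ℝ) :
    ∫ u in (max s t)..(t+1), (u - s) ^ (-(1/2 : ℝ)) = incrementKernel t s := by
  rw [intervalIntegral.integral_comp_sub_right (fun u => u ^ (-(1/2 : ℝ))),
    integral_rpow (Or.inl (by norm_num))]
  unfold incrementKernel
  rw [Real.sqrt_eq_rpow, Real.sqrt_eq_rpow]
  norm_num
  ring

lemma intervalIntegrable_rpow_mul_sq_incrementKernel {a : ℝ} (ha : -1 < a) (t x y : ℝ) :
    IntervalIntegrable (fun s => s ^ a * incrementKernel t s ^ 2) volume x y :=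
  (intervalIntegrable_rpow' ha).mul_continuousOn
    ((continuous_incrementKernel t).pow 2).continuousOn

lemma integral_one_div_add_one_sub {t : ℝ} (ht : 0 ≤ t) :
    ∫ s in (0:ℝ)..t, 1 / (t + 1 - s) = Real.log (t + 1) := by
  rw [intervalIntegral.integral_comp_sub_left (fun x => 1 / x),
    integral_one_div_of_pos (by linarith) (by linarith)]
  simp

lemma integral_one_div_add_one_sub_sq_le {t : ℝ} (ht : 0 ≤ t) :
    ∫ s in (0:ℝ)..t, 1 / (t + 1 - s) ^ 2 ≤ 1 := by
  have h : ∀ s ∈ Set.uIcc 0 t, t + 1 - s ≠ 0 := by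
    intro s hs
    rw [Set.uIcc_of_le ht] at hs
    linarith [hs.2]
  rw [integral_eq_sub_of_hasDerivAt (f := fun s => 1 / (t + 1 - s))]
  · have : 0 ≤ 1 / (t + 1) := by positivity
    simp only [add_sub_cancel_left, sub_zero]
    linarith
  · intro s hs
    have := ((hasDerivAt_id s).const_sub (t + 1)).fun_inv (h s hs)
    simpa [one_div] using this
  · apply ContinuousOn.intervalIntegrable
    exact continuousOn_const.div (by fun_prop) fun s hs => pow_ne_zero 2 (h s hs)

/-- The weighted `L²` norm of the kernel is `t ^ a * log t` up to `O(t ^ a)`. -/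
lemma exists_abs_integral_incrementKernel_sub_le {a : ℝ} (ha : -1 < a) :
    ∃ C : ℝ, ∀ t : ℝ, 1 ≤ t →
      |(∫ s in (0:ℝ)..(t+1), s ^ a * incrementKernel t s ^ 2) - t ^ a * Real.log t|
        ≤ C * t ^ a := by
  set D := 2 + 2 * |a| with hD
  refine ⟨D * (1 + 1 / (a + 1)) + 4 + 4 * (1 + 2 ^ a) + 1, fun t ht => ?_⟩
  have ht0 : 0 < t := by linarith
  have hta : 0 < t ^ a := Real.rpow_pos_of_pos ht0 a
  have hI := intervalIntegrable_rpow_mul_sq_incrementKernel ha t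
  have hne : ∀ s ∈ Set.uIcc 0 t, t + 1 - s ≠ 0 := by
    intro s hs
    rw [Set.uIcc_of_le ht0.le] at hs
    linarith [hs.2]
  have hI1 : IntervalIntegrable (fun s => 1 / (t + 1 - s)) volume 0 t :=
    (continuousOn_const.div (by fun_prop) hne).intervalIntegrable
  have hI2 : IntervalIntegrable (fun s => 1 / (t + 1 - s) ^ 2) volume 0 t :=
    (continuousOn_const.div (by fun_prop) fun s hs => pow_ne_zero 2 (hne s hs)).intervalIntegrable
  have hI3 : IntervalIntegrable (fun s => t ^ a + s ^ a) volume 0 t :=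
    intervalIntegrable_const.add (intervalIntegrable_rpow' ha)
  have hfirst : |(∫ s in (0:ℝ)..t, s ^ a * incrementKernel t s ^ 2) - t ^ a * Real.log (t + 1)|
      ≤ (D * (1 + 1 / (a + 1)) + 4) * t ^ a := by
    rw [← integral_one_div_add_one_sub ht0.le, ← intervalIntegral.integral_const_mul,
      ← intervalIntegral.integral_sub (hI _ _) (hI1.const_mul _), ← Real.norm_eq_abs]
    refine (norm_integral_le_of_norm_le
      (g := fun s => D / t * (t ^ a + s ^ a) + 4 * t ^ a * (1 / (t + 1 - s) ^ 2)) ht0.le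
      (ae_of_all _ fun s hs => ?_) ((hI3.const_mul _).add (hI2.const_mul _))).trans ?_
    · obtain ⟨k1, k2, k3⟩ := incrementKernel_sq_bounds hs.2
      have hb := abs_rpow_sub_rpow_le a hs.1 hs.2
      rw [← hD] at hb
      set K := incrementKernel t s ^ 2
      have hK : 0 ≤ K := sq_nonneg _
      have hsa : 0 ≤ s ^ a := Real.rpow_nonneg hs.1.le a
      have hD0 : 0 ≤ D := by positivity
      rw [Real.norm_eq_abs]
      calc |s ^ a * K - t ^ a * (1 / (t + 1 - s))|
          = |(s ^ a - t ^ a) * K + t ^ a * (K - 1 / (t + 1 - s))| := by ring_nf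
        _ ≤ |s ^ a - t ^ a| * K + t ^ a * (K - 1 / (t + 1 - s)) := by
          refine (abs_add_le _ _).trans (le_of_eq ?_)
          rw [abs_mul, abs_mul, abs_of_nonneg hK, abs_of_pos hta,
            abs_of_nonneg (sub_nonneg.2 k2)]
        _ ≤ D * ((t ^ a + s ^ a) / t) * (t - s) * K + t ^ a * (4 / (t + 1 - s) ^ 2) := by
          gcongr
        _ = D * ((t ^ a + s ^ a) / t) * ((t - s) * K) + t ^ a * (4 / (t + 1 - s) ^ 2) := by ring
        _ ≤ D * ((t ^ a + s ^ a) / t) * 1 + t ^ a * (4 / (t + 1 - s) ^ 2) := by gcongr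
        _ = _ := by ring
    · rw [intervalIntegral.integral_add (hI3.const_mul _) (hI2.const_mul _),
        intervalIntegral.integral_const_mul, intervalIntegral.integral_const_mul,
        intervalIntegral.integral_add intervalIntegrable_const (intervalIntegrable_rpow' ha),
        integral_rpow (Or.inl ha), intervalIntegral.integral_const, Real.zero_rpow (by linarith),
        Real.rpow_add_one ht0.ne']
      have h1 := integral_one_div_add_one_sub_sq_le ht0.le
      have h2 : D / t * ((t - 0) • t ^ a + (t ^ a * t - 0) / (a + 1))
          = D * (1 + 1 / (a + 1)) * t ^ a := by
        rw [smul_eq_mul]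
        field_simp
        ring
      rw [h2]
      nlinarith
  have hsecond : |∫ s in t..(t+1), s ^ a * incrementKernel t s ^ 2|
      ≤ 4 * (1 + 2 ^ a) * t ^ a := by
    have := norm_integral_le_of_norm_le_const (a := t) (b := t + 1)
      (C := 4 * (1 + 2 ^ a) * t ^ a) (f := fun s => s ^ a * incrementKernel t s ^ 2) ?_
    · simpa using this
    intro s hs
    rw [Set.uIoc_of_le (by linarith)] at hs
    have hs0 : 0 < s := ht0.trans hs.1
    have h4 := incrementKernel_sq_le hs.2
    have hsa : 0 < s ^ a := Real.rpow_pos_of_pos hs0 a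
    have h2a : (0:ℝ) < 2 ^ a := Real.rpow_pos_of_pos two_pos a
    have hle : s ^ a ≤ (1 + 2 ^ a) * t ^ a := by
      rcases le_total 0 a with h | h
      · have : s ^ a ≤ (2 * t) ^ a := Real.rpow_le_rpow hs0.le (by linarith [hs.2]) h
        rw [Real.mul_rpow two_pos.le ht0.le] at this
        linarith
      · have := Real.rpow_le_rpow_of_nonpos ht0 hs.1.le h
        nlinarith
    rw [Real.norm_eq_abs, abs_of_nonneg (by positivity)]
    calc s ^ a * incrementKernel t s ^ 2 ≤ (1 + 2 ^ a) * t ^ a * 4 := by gcongr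
      _ = _ := by ring
  have hlog : |t ^ a * Real.log (t + 1) - t ^ a * Real.log t| ≤ t ^ a := by
    rw [← mul_sub, abs_mul, abs_of_pos hta, ← Real.log_div (by linarith) ht0.ne']
    have h1 : 1 ≤ (t + 1) / t := by rw [le_div_iff₀ ht0]; linarith
    have h2 : (t + 1) / t ≤ 2 := by rw [div_le_iff₀ ht0]; linarith
    rw [abs_of_nonneg (Real.log_nonneg h1)]
    have := Real.log_le_sub_one_of_pos (show 0 < (t + 1) / t by linarith)
    nlinarith
  rw [← intervalIntegral.integral_add_adjacent_intervals (hI 0 t) (hI t (t + 1))]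
  rw [abs_le] at *
  constructor <;> linarith [hfirst.1, hfirst.2, hsecond.1, hsecond.2, hlog.1, hlog.2]

lemma tendsto_integral_incrementKernel {a : ℝ} (ha : -1 < a) :
    Tendsto (fun t : ℝ => (∫ s in (0:ℝ)..(t+1), s ^ a * incrementKernel t s ^ 2) /
      (t ^ a * Real.log t)) atTop (nhds 1) := by
  obtain ⟨C, hC⟩ := exists_abs_integral_incrementKernel_sub_le ha
  rw [tendsto_iff_norm_sub_tendsto_zero]
  refine squeeze_zero' (Eventually.of_forall fun _ => norm_nonneg _) ?_
    (Real.tendsto_log_atTop.const_div_atTop C)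
  filter_upwards [eventually_gt_atTop 1] with t ht
  have hta : 0 < t ^ a := Real.rpow_pos_of_pos (by linarith) a
  have hl : 0 < Real.log t := Real.log_pos ht
  rw [Real.norm_eq_abs, div_sub_one (by positivity), abs_div, abs_of_pos (mul_pos hta hl),
    div_le_div_iff₀ (by positivity) hl]
  nlinarith [hC t ht.le]

section InnerIntegral

variable {β t s m M : ℝ}

lemma intervalIntegrable_sub_rpow_neg_half (s x y : ℝ) :
    IntervalIntegrable (fun u => (u - s) ^ (-(1/2 : ℝ))) volume x y := by
  have h : IntervalIntegrable (fun u : ℝ => u ^ (-(1/2 : ℝ))) volume (x - s) (y - s) :=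
    intervalIntegrable_rpow' (by norm_num)
  simpa using h.comp_sub_right s

lemma intervalIntegrable_rpow_mul_sub_rpow (ht : 0 < t) (hs : s ≤ t + 1) :
    IntervalIntegrable (fun u => u ^ β * (u - s) ^ (-(1/2 : ℝ))) volume (max s t) (t + 1) := by
  refine (intervalIntegrable_sub_rpow_neg_half s _ _).continuousOn_mul ?_
  intro u hu
  rw [Set.uIcc_of_le (max_le hs (by linarith))] at hu
  have : u ≠ 0 := (ht.trans_le ((le_max_right s t).trans hu.1)).ne'
  exact (Real.continuousAt_rpow_const _ _ (Or.inl this)).continuousWithinAt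

lemma innerIntegral_bounds (ht : 0 < t) (hs : s ≤ t + 1)
    (hm : ∀ u ∈ Set.Icc t (t + 1), m ≤ u ^ β) (hM : ∀ u ∈ Set.Icc t (t + 1), u ^ β ≤ M) :
    m * incrementKernel t s ≤ ∫ u in (max s t)..(t+1), u ^ β * (u - s) ^ (-(1/2 : ℝ)) ∧
      ∫ u in (max s t)..(t+1), u ^ β * (u - s) ^ (-(1/2 : ℝ)) ≤ M * incrementKernel t s := by
  have hle : max s t ≤ t + 1 := max_le hs (by linarith)
  have hJ := intervalIntegrable_sub_rpow_neg_half s (max s t) (t + 1)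
  have hI := intervalIntegrable_rpow_mul_sub_rpow (β := β) ht hs
  rw [← integral_sub_rpow_neg_half, ← intervalIntegral.integral_const_mul,
    ← intervalIntegral.integral_const_mul]
  constructor
  · refine intervalIntegral.integral_mono_on hle (hJ.const_mul _) hI fun u hu => ?_
    have h0 : 0 ≤ u - s := by linarith [le_max_left s t, hu.1]
    exact mul_le_mul_of_nonneg_right (hm u ⟨(le_max_right s t).trans hu.1, hu.2⟩)
      (Real.rpow_nonneg h0 _)
  · refine intervalIntegral.integral_mono_on hle hI (hJ.const_mul _) fun u hu => ?_
    have h0 : 0 ≤ u - s := by linarith [le_max_left s t, hu.1]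
    exact mul_le_mul_of_nonneg_right (hM u ⟨(le_max_right s t).trans hu.1, hu.2⟩)
      (Real.rpow_nonneg h0 _)

lemma aestronglyMeasurable_innerIntegral (β t : ℝ) :
    AEStronglyMeasurable
      (fun s => ∫ u in (max s t)..(t+1), u ^ β * (u - s) ^ (-(1/2 : ℝ)))
      (volume.restrict (Set.Ioc 0 (t + 1))) := by
  let A : Set (ℝ × ℝ) := {p | max p.1 t < p.2 ∧ p.2 ≤ t + 1}
  have hA : MeasurableSet A :=
    (measurableSet_lt (measurable_fst.max measurable_const) measurable_snd).inter
      (measurableSet_le measurable_snd measurable_const)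
  let F : ℝ × ℝ → ℝ := A.indicator fun p => p.2 ^ β * (p.2 - p.1) ^ (-(1/2 : ℝ))
  have hF : Measurable F := Measurable.indicator (by fun_prop) hA
  refine ⟨fun s => ∫ u, F (s, u), hF.stronglyMeasurable.integral_prod_right', ?_⟩
  filter_upwards [ae_restrict_mem measurableSet_Ioc] with s hs
  rw [intervalIntegral.integral_of_le (max_le hs.2 (by linarith)),
    ← MeasureTheory.integral_indicator measurableSet_Ioc]
  rfl

lemma outerIntegral_bounds {a : ℝ} (ha : -1 < a) (ht : 0 < t) (hm0 : 0 ≤ m)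
    (hm : ∀ u ∈ Set.Icc t (t + 1), m ≤ u ^ β) (hM : ∀ u ∈ Set.Icc t (t + 1), u ^ β ≤ M) :
    m ^ 2 * (∫ s in (0:ℝ)..(t+1), s ^ a * incrementKernel t s ^ 2) ≤
        ∫ s in (0:ℝ)..(t+1), s ^ a *
          (∫ u in (max s t)..(t+1), u ^ β * (u - s) ^ (-(1/2 : ℝ))) ^ 2 ∧
      ∫ s in (0:ℝ)..(t+1), s ^ a *
          (∫ u in (max s t)..(t+1), u ^ β * (u - s) ^ (-(1/2 : ℝ))) ^ 2 ≤
        M ^ 2 * (∫ s in (0:ℝ)..(t+1), s ^ a * incrementKernel t s ^ 2) := by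
  have h01 : (0:ℝ) ≤ t + 1 := by linarith
  have hW := intervalIntegrable_rpow_mul_sq_incrementKernel ha t 0 (t + 1)
  have hpt : ∀ s ∈ Set.Icc 0 (t + 1),
      m ^ 2 * (s ^ a * incrementKernel t s ^ 2) ≤ s ^ a *
          (∫ u in (max s t)..(t+1), u ^ β * (u - s) ^ (-(1/2 : ℝ))) ^ 2 ∧
      s ^ a * (∫ u in (max s t)..(t+1), u ^ β * (u - s) ^ (-(1/2 : ℝ))) ^ 2 ≤
        M ^ 2 * (s ^ a * incrementKernel t s ^ 2) := by
    intro s hs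
    obtain ⟨h1, h2⟩ := innerIntegral_bounds ht hs.2 hm hM
    have hsa : 0 ≤ s ^ a := Real.rpow_nonneg hs.1 a
    have hJ := mul_nonneg hm0 (incrementKernel_nonneg hs.2)
    constructor
    · calc _ = s ^ a * (m * incrementKernel t s) ^ 2 := by ring
        _ ≤ _ := by gcongr
    · calc _ ≤ s ^ a * (M * incrementKernel t s) ^ 2 :=
            mul_le_mul_of_nonneg_left (pow_le_pow_left₀ (hJ.trans h1) h2 2) hsa
        _ = _ := by ring
  have hV : IntervalIntegrable (fun s => s ^ a *
      (∫ u in (max s t)..(t+1), u ^ β * (u - s) ^ (-(1/2 : ℝ))) ^ 2) volume 0 (t + 1) := by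
    refine (hW.const_mul (M ^ 2)).mono_fun ?_ ?_
    · rw [Set.uIoc_of_le h01]
      exact (by fun_prop : Measurable fun s : ℝ => s ^ a).aestronglyMeasurable.mul
        ((aestronglyMeasurable_innerIntegral β t).pow 2)
    · rw [Set.uIoc_of_le h01]
      filter_upwards [ae_restrict_mem measurableSet_Ioc] with s hs
      have hsa : 0 ≤ s ^ a := Real.rpow_nonneg hs.1.le a
      rw [Real.norm_of_nonneg (by positivity), Real.norm_of_nonneg (by positivity)]
      exact (hpt s ⟨hs.1.le, hs.2⟩).2
  rw [← intervalIntegral.integral_const_mul, ← intervalIntegral.integral_const_mul]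
  exact ⟨intervalIntegral.integral_mono_on h01 (hW.const_mul _) hV fun s hs => (hpt s hs).1,
    intervalIntegral.integral_mono_on h01 hV (hW.const_mul _) fun s hs => (hpt s hs).2⟩

end InnerIntegral

lemma rpow_mem_Icc_of_mem_Icc (β : ℝ) {t u : ℝ} (ht : 0 < t) (hu : u ∈ Set.Icc t (t + 1)) :
    u ^ β ∈ Set.Icc (min (t ^ β) ((t + 1) ^ β)) (max (t ^ β) ((t + 1) ^ β)) := by
  have hu0 : 0 < u := ht.trans_le hu.1
  rcases le_total 0 β with h | h
  · exact ⟨min_le_of_left_le (Real.rpow_le_rpow ht.le hu.1 h),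
      le_max_of_le_right (Real.rpow_le_rpow hu0.le hu.2 h)⟩
  · exact ⟨min_le_of_right_le (Real.rpow_le_rpow_of_nonpos hu0 hu.2 h),
      le_max_of_le_left (Real.rpow_le_rpow_of_nonpos ht hu.1 h)⟩

lemma tendsto_add_one_div_rpow (β : ℝ) :
    Tendsto (fun t : ℝ => ((t + 1) / t) ^ β) atTop (nhds 1) := by
  have h : Tendsto (fun t : ℝ => 1 + 1 / t) atTop (nhds 1) := by
    simpa using (tendsto_const_nhds (x := (1:ℝ))).add (tendsto_id.const_div_atTop (1:ℝ))
  have h2 := h.rpow_const (p := β) (Or.inl one_ne_zero)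
  rw [Real.one_rpow] at h2
  refine h2.congr' ?_
  filter_upwards [eventually_gt_atTop 0] with t ht
  rw [add_div, div_self ht.ne']

/-- Lemma 3.4, case `γ = -1/2`: asymptotics of the incremental variance
`E(X_{t+1} - X_t)²` of the Gaussian Volterra process. -/
theorem stmt_5 (α β : ℝ) (hα : -(1/2 : ℝ) < α)
    (hαβγ : -(3/2 : ℝ) < α + β + (-(1/2 : ℝ)))
    (V : ℝ → ℝ)
    (hV : ∀ t : ℝ, V t = ∫ s in (0:ℝ)..(t+1), s ^ (2*α) *
      (∫ u in (max s t)..(t+1), u ^ β * (u - s) ^ (-(1/2 : ℝ))) ^ 2) :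
    Tendsto (fun t : ℝ => V t / (t ^ (2*α+2*β) * Real.log t)) atTop (nhds 1) := by
  have ha : -1 < 2 * α := by linarith
  have hW := tendsto_integral_incrementKernel ha
  have hq := tendsto_add_one_div_rpow β
  have hlo := (((tendsto_const_nhds (x := (1:ℝ))).min hq).pow 2).mul hW
  have hhi := (((tendsto_const_nhds (x := (1:ℝ))).max hq).pow 2).mul hW
  simp only [min_self, max_self, one_pow, mul_one] at hlo hhi
  have hbounds : ∀ t : ℝ, 1 < t →
      min 1 (((t + 1) / t) ^ β) ^ 2 * ((∫ s in (0:ℝ)..(t+1), s ^ (2*α) *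
        incrementKernel t s ^ 2) / (t ^ (2*α) * Real.log t)) ≤
          V t / (t ^ (2*α+2*β) * Real.log t) ∧
      V t / (t ^ (2*α+2*β) * Real.log t) ≤
        max 1 (((t + 1) / t) ^ β) ^ 2 * ((∫ s in (0:ℝ)..(t+1), s ^ (2*α) *
        incrementKernel t s ^ 2) / (t ^ (2*α) * Real.log t)) := by
    intro t ht
    have ht0 : 0 < t := by linarith
    have hl : 0 < Real.log t := Real.log_pos ht
    have htα : 0 < t ^ (2*α) := Real.rpow_pos_of_pos ht0 _
    have htβ : 0 < t ^ β := Real.rpow_pos_of_pos ht0 _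
    have ht1β : 0 < (t + 1) ^ β := Real.rpow_pos_of_pos (by linarith) _
    obtain ⟨h1, h2⟩ := outerIntegral_bounds ha ht0 (le_min htβ.le ht1β.le)
      (fun u hu => (rpow_mem_Icc_of_mem_Icc β ht0 hu).1)
      (fun u hu => (rpow_mem_Icc_of_mem_Icc β ht0 hu).2)
    rw [← hV] at h1 h2
    have hpow : t ^ (2*α+2*β) = t ^ (2*α) * (t ^ β) ^ 2 := by
      rw [Real.rpow_add ht0, mul_comm 2 β, Real.rpow_mul_natCast ht0.le β 2 |>.symm]
      norm_num
    have hmin : min 1 (((t + 1) / t) ^ β) = min (t ^ β) ((t + 1) ^ β) / t ^ β := by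
      rw [Real.div_rpow (by linarith) ht0.le, ← min_div_div_right htβ.le, div_self htβ.ne']
    have hmax : max 1 (((t + 1) / t) ^ β) = max (t ^ β) ((t + 1) ^ β) / t ^ β := by
      rw [Real.div_rpow (by linarith) ht0.le, ← max_div_div_right htβ.le, div_self htβ.ne']
    have hden : 0 < t ^ (2*α) * (t ^ β) ^ 2 * Real.log t := by positivity
    rw [hpow, hmin, hmax]
    constructor
    · refine le_trans (le_of_eq ?_) (div_le_div_of_nonneg_right h1 hden.le)
      field_simp
    · refine (div_le_div_of_nonneg_right h2 hden.le).trans (le_of_eq ?_)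
      field_simp
  refine tendsto_of_tendsto_of_tendsto_of_le_of_le' hlo hhi ?_ ?_
  · filter_upwards [eventually_gt_atTop 1] with t ht using (hbounds t ht).1
  · filter_upwards [eventually_gt_atTop 1] with t ht using (hbounds t ht).2
end
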